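/- For any irreducible complex affine variety X, the group of units O(X)^× of the coordinate ring is isomorphic to ℂ* × ℤ^m for some m ≥ 0 (Samuel's Lemma); moreover m is at most the rank of H¹(X, ℤ). -/

import Mathlib

open scoped Cardinal

/-!
Order the units of `A` along the places of its fraction field lying over the hyperplane at infinity
of a Noether normalization. There are finitely many, and a unit of order zero at all of them is
integral over the polynomial ring and over the valuation ring of the degree, hence over `ℂ`, hence
constant. So `Aˣ` modulo constants embeds into a finitely generated free abelian group, and the
extension by the constants splits.

The winding number pairs `Aˣ` with `H₁`, so for the bound on the rank it suffices to exhibit, for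
each nonconstant unit, a loop around which it has nonzero winding number. Such a unit is
transcendental over `ℂ`, so it is a coordinate of an affine space over which the variety is
generically étale. Let that coordinate turn around `0` repeatedly, on a circle deformed to miss the
branch locus. The motion lifts to the variety, and the lift revisits a point because the fibres are
finite. Since every point can be joined to the étale locus, the loop can be moved to any base
point.
-/

open Polynomial Filter Topology

universe u

/-! ### Orders of units at infinity -/

section Places

open IsDedekindDomain

lemma finite_heightOneSpectrum_of_isLocalRing (O B : Type*) [CommRing O] [IsLocalRing O]
    [CommRing B] [IsDedekindDomain B] [Algebra O B] [FaithfulSMul O B] [Algebra.IsIntegral O B] :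
    Finite (HeightOneSpectrum B) := by
  have : IsDomain O := (FaithfulSMul.algebraMap_injective O B).isDomain (algebraMap O B)
  have := (IsDedekindDomain.primesOver_finite (IsLocalRing.maximalIdeal O) B).to_subtype
  refine Finite.of_injective (β := (IsLocalRing.maximalIdeal O).primesOver B)
    (fun v ↦ ⟨v.asIdeal, v.isPrime, ⟨?_⟩⟩)
    fun v w h ↦ HeightOneSpectrum.ext (congrArg Subtype.val h)
  have := v.isMaximal
  exact (IsLocalRing.eq_maximalIdeal
    (Ideal.isMaximal_comap_of_isIntegral_of_isMaximal v.asIdeal)).symm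

/-- The valuations of a nonzero element of `K` at all places of `B`, as additive integers; these are
minus the orders of vanishing. -/
noncomputable def placesHom (B K : Type*) [CommRing B] [IsDedekindDomain B] [Field K] [Algebra B K]
    [IsFractionRing B K] : Kˣ →* Multiplicative (HeightOneSpectrum B → ℤ) :=
  .mk' (fun x ↦ .ofAdd fun v ↦ (v.valuationOfNeZero x).toAdd) fun x y ↦ by
    simp only [map_mul, toAdd_mul]
    rfl

lemma mem_range_algebraMap_of_placesHom_eq_one {B K : Type*} [CommRing B] [IsDedekindDomain B]
    [Field K] [Algebra B K] [IsFractionRing B K] {x : Kˣ} (hx : placesHom B K x = 1) :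
    (x : K) ∈ (algebraMap B K).range := by
  refine HeightOneSpectrum.mem_integers_of_valuation_le_one K (x : K) fun v ↦ ?_
  rw [← HeightOneSpectrum.valuationOfNeZero_eq]
  have : v.valuationOfNeZero x = 1 := congrFun hx v
  rw [this, WithZero.coe_one]

lemma exists_hom_forall_map_eq_one_isIntegral (O F : Type*) (K : Type u) [CommRing O] [IsDomain O]
    [IsDiscreteValuationRing O] [Field F] [Field K] [Algebra O F] [IsFractionRing O F]
    [Algebra F K] [Algebra O K] [IsScalarTower O F K] [FiniteDimensional F K]
    [Algebra.IsSeparable F K] :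
    ∃ (ι : Type u) (_ : Finite ι) (φ : Kˣ →* Multiplicative (ι → ℤ)),
      ∀ x, φ x = 1 → IsIntegral O (x : K) := by
  let B := integralClosure O K
  have : IsDedekindDomain B := integralClosure.isDedekindDomain O F K
  have : IsFractionRing B K := integralClosure.isFractionRing_of_finite_extension F K
  have : FaithfulSMul O K := .trans O F K
  have : FaithfulSMul O B := .tower_bot O B K
  refine ⟨HeightOneSpectrum B, finite_heightOneSpectrum_of_isLocalRing O B, placesHom B K,
    fun x hx ↦ ?_⟩
  obtain ⟨b, hb⟩ := mem_range_algebraMap_of_placesHom_eq_one hx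
  exact hb ▸ b.2

end Places

section DegreeValuation

open scoped nonZeroDivisors

variable {σ k : Type*} [CommRing k] [IsDomain k]

variable (σ k) in
/-- The valuation `p ↦ exp (deg p)` given by the total degree: the order of pole along the
hyperplane at infinity. -/
noncomputable def degreeValuation : Valuation (MvPolynomial σ k) (WithZero (Multiplicative ℤ)) where
  toFun p := open Classical in if p = 0 then 0 else WithZero.exp (p.totalDegree : ℤ)
  map_zero' := by simp
  map_one' := by simp
  map_mul' p q := by
    by_cases hp : p = 0
    · simp [hp]
    by_cases hq : q = 0
    · simp [hq]
    simp [hp, hq, MvPolynomial.totalDegree_mul_of_isDomain, WithZero.exp_add]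
  map_add_le_max' p q := by
    by_cases hpq : p + q = 0
    · simp [hpq]
    by_cases hp : p = 0
    · rw [hp, zero_add]
      exact le_max_right _ _
    by_cases hq : q = 0
    · rw [hq, add_zero]
      exact le_max_left _ _
    simp only [hpq, hp, hq, if_false, le_max_iff, WithZero.exp_le_exp, Nat.cast_le]
    exact le_max_iff.1 (MvPolynomial.totalDegree_add p q)

lemma degreeValuation_apply {p : MvPolynomial σ k} (hp : p ≠ 0) :
    degreeValuation σ k p = WithZero.exp (p.totalDegree : ℤ) :=
  if_neg hp

lemma mem_range_C_of_degreeValuation_le_one {p : MvPolynomial σ k}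
    (hp : degreeValuation σ k p ≤ 1) : p ∈ (MvPolynomial.C (σ := σ) (R := k)).range := by
  rcases eq_or_ne p 0 with rfl | h₀
  · exact zero_mem _
  rw [degreeValuation_apply h₀, ← WithZero.exp_zero, WithZero.exp_le_exp] at hp
  exact ⟨_, (MvPolynomial.totalDegree_eq_zero_iff_eq_C.1 (by omega)).symm⟩

variable (σ k) in
/-- The extension of `degreeValuation` to the field of rational functions. -/
noncomputable def degreeValuationFrac :
    Valuation (FractionRing (MvPolynomial σ k)) (WithZero (Multiplicative ℤ)) :=
  (degreeValuation σ k).extendToLocalization (S := (MvPolynomial σ k)⁰)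
    (fun p hp ↦ by
      change degreeValuation σ k p ≠ 0
      rw [degreeValuation_apply (nonZeroDivisors.ne_zero hp)]
      exact WithZero.exp_ne_zero) _

lemma degreeValuationFrac_algebraMap (p : MvPolynomial σ k) :
    degreeValuationFrac σ k (algebraMap _ _ p) = degreeValuation σ k p :=
  Valuation.extendToLocalization_apply_map_apply _ _ _ p

instance isDiscreteValuationRing_degreeValuationFrac [Nonempty σ] :
    IsDiscreteValuationRing (degreeValuationFrac σ k).valuationSubring := by
  obtain ⟨i⟩ := ‹Nonempty σ›
  have hX : degreeValuationFrac σ k (algebraMap (MvPolynomial σ k) _ (.X i)) = WithZero.exp 1 := by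
    rw [degreeValuationFrac_algebraMap, degreeValuation_apply (MvPolynomial.X_ne_zero i),
      MvPolynomial.totalDegree_X, Nat.cast_one]
  have : Nontrivial (MonoidWithZeroHom.valueGroup (.ofClass (degreeValuationFrac σ k))) := by
    refine ⟨⟨Units.mk0 (WithZero.exp 1) WithZero.exp_ne_zero,
      MonoidWithZeroHom.mem_valueGroup _ ⟨_, hX⟩⟩, 1, fun h ↦ ?_⟩
    have h' : WithZero.exp (1 : ℤ) = 1 := congrArg Units.val (congrArg Subtype.val h)
    exact one_ne_zero (WithZero.exp_inj.1 (h'.trans WithZero.exp_zero.symm))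
  have : IsCyclic (MonoidWithZeroHom.valueGroup (.ofClass (degreeValuationFrac σ k))) :=
    inferInstance
  exact (degreeValuationFrac σ k).valuationSubring_isDiscreteValuationRing

end DegreeValuation

section Integrality

/- The coefficients of the minimal polynomial over `F` lie in `R` and in `O`. -/
lemma isIntegral_of_isIntegral_of_isIntegral {k R O F K : Type*} [CommRing k] [CommRing R]
    [CommRing O] [Field F] [Field K] [Algebra k R] [IsDomain R] [IsIntegrallyClosed R]
    [Algebra R F] [IsFractionRing R F] [IsDomain O] [IsIntegrallyClosed O] [Algebra O F]
    [IsFractionRing O F] [Algebra F K] [Algebra R K] [IsScalarTower R F K] [Algebra O K]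
    [IsScalarTower O F K] [Algebra k K] [IsScalarTower k R K]
    (h : ∀ r : R, algebraMap R F r ∈ (algebraMap O F).range → r ∈ (algebraMap k R).range) {x : K}
    (hR : IsIntegral R x) (hO : IsIntegral O x) : IsIntegral k x := by
  have hmin : (minpoly R x).map (algebraMap R F) = (minpoly O x).map (algebraMap O F) :=
    (minpoly.isIntegrallyClosed_eq_field_fractions' F hR).symm.trans
      (minpoly.isIntegrallyClosed_eq_field_fractions' F hO)
  have hlift : minpoly R x ∈ Polynomial.lifts (algebraMap k R) := by
    refine (Polynomial.lifts_iff_coeff_lifts _).2 fun i ↦ h _ ⟨(minpoly O x).coeff i, ?_⟩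
    rw [← Polynomial.coeff_map, ← Polynomial.coeff_map, hmin]
  obtain ⟨q, hq, -, hmonic⟩ :=
    Polynomial.lifts_and_degree_eq_and_monic hlift (minpoly.monic hR)
  refine ⟨q, hmonic, ?_⟩
  rw [IsScalarTower.algebraMap_eq k R K, ← Polynomial.eval₂_map, hq]
  exact minpoly.aeval R x

end Integrality

section Units

open scoped nonZeroDivisors

lemma exists_units_hom_of_finite_mvPolynomial (σ k : Type*) (A : Type u) [Field k] [CharZero k]
    [Nonempty σ] [CommRing A] [IsDomain A] [Algebra k A] [Algebra (MvPolynomial σ k) A]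
    [IsScalarTower k (MvPolynomial σ k) A] [FaithfulSMul (MvPolynomial σ k) A]
    [Module.Finite (MvPolynomial σ k) A] :
    ∃ (ι : Type u) (_ : Finite ι) (φ : Aˣ →* Multiplicative (ι → ℤ)),
      ∀ x, φ x = 1 → IsIntegral k (x : A) := by
  let R := MvPolynomial σ k
  let F := FractionRing R
  let K := FractionRing A
  let _ : Algebra F K := FractionRing.liftAlgebra R K
  have : IsScalarTower R F K := FractionRing.isScalarTower_liftAlgebra R K
  have : CharZero F := charZero_of_injective_algebraMap (IsFractionRing.injective R F)
  have : Module.Finite F K := .of_isLocalization R A R⁰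
  let O := (degreeValuationFrac σ k).valuationSubring
  let _ : Algebra O K := ((algebraMap F K).comp (algebraMap O F)).toAlgebra
  have : IsScalarTower O F K := .of_algebraMap_eq fun _ ↦ rfl
  obtain ⟨ι, hι, φ, hφ⟩ := exists_hom_forall_map_eq_one_isIntegral O F K
  refine ⟨ι, hι, φ.comp (Units.map (algebraMap A K)), fun x hx ↦ ?_⟩
  rw [← isIntegral_algebraMap_iff (IsFractionRing.injective A K)]
  have hx_R : IsIntegral R (algebraMap A K x) := (Algebra.IsIntegral.isIntegral (x : A)).algebraMap
  refine isIntegral_of_isIntegral_of_isIntegral (F := F) (fun r hr ↦ ?_) hx_R (hφ _ hx)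
  obtain ⟨y, hy⟩ := hr
  refine mem_range_C_of_degreeValuation_le_one ?_
  rw [← degreeValuationFrac_algebraMap, ← hy]
  exact y.2

lemma exists_units_hom_of_finiteType (k : Type*) (A : Type u) [Field k] [CharZero k] [CommRing A]
    [IsDomain A] [Algebra k A] [Algebra.FiniteType k A] :
    ∃ (ι : Type u) (_ : Finite ι) (φ : Aˣ →* Multiplicative (ι → ℤ)),
      ∀ x, φ x = 1 → IsIntegral k (x : A) := by
  obtain ⟨s, g, hg, hfin⟩ := exists_finite_inj_algHom_of_fg k A
  let R := MvPolynomial (Fin s) k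
  let _ : Algebra R A := g.toRingHom.toAlgebra
  have : IsScalarTower k R A := .of_algHom g
  have : FaithfulSMul R A := (faithfulSMul_iff_algebraMap_injective R A).2 hg
  have : Module.Finite R A := hfin
  obtain h | h := isEmpty_or_nonempty (Fin s)
  · have : Algebra.IsIntegral k R :=
      Algebra.isIntegral_of_surjective (MvPolynomial.C_surjective _)
    exact ⟨PEmpty, inferInstance, 1, fun x _ ↦
      isIntegral_trans (R := k) (A := R) _ (Algebra.IsIntegral.isIntegral _)⟩
  · exact exists_units_hom_of_finite_mvPolynomial (Fin s) k A

end Units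

section Splitting

lemma exists_linearEquiv_prod_of_ker_eq_range {R M N P : Type*} [CommRing R] [IsDomain R]
    [IsPrincipalIdealRing R] [AddCommGroup M] [Module R M] [AddCommGroup N] [Module R N]
    [AddCommGroup P] [Module R P] [Module.Free R P] [Module.Finite R P] {f : M →ₗ[R] N}
    (hf : Function.Injective f) {g : N →ₗ[R] P} (h : g.ker = f.range) :
    ∃ (m : ℕ) (e : (M × (Fin m → R)) ≃ₗ[R] N), ∀ x, e (x, 0) = f x := by
  have hexact : Function.Exact f g.rangeRestrict := by
    rw [LinearMap.exact_iff, LinearMap.ker_rangeRestrict, h]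
  obtain ⟨s, hs⟩ := Module.projective_lifting_property g.rangeRestrict .id
    g.surjective_rangeRestrict
  obtain ⟨e, he, -⟩ := hexact.splitSurjectiveEquiv hf ⟨s, hs⟩
  refine ⟨Module.finrank R g.range,
    (LinearEquiv.prodCongr (.refl R M) (Module.finBasis R g.range).equivFun.symm).trans e.symm,
    fun x ↦ ?_⟩
  simp [he]

lemma exists_mulEquiv_prod_of_ker_eq_range {C U ι : Type*} [CommGroup C] [CommGroup U] [Finite ι]
    {j : C →* U} (hj : Function.Injective j) {φ : U →* Multiplicative (ι → ℤ)}
    (h : φ.ker = j.range) :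
    ∃ (m : ℕ) (e : C × Multiplicative (Fin m → ℤ) ≃* U), ∀ c, e (c, 1) = j c := by
  obtain ⟨m, e, he⟩ := exists_linearEquiv_prod_of_ker_eq_range
    (f := j.toAdditive.toIntLinearMap) hj (g := φ.toAdditiveLeft.toIntLinearMap) <| by
      ext u
      exact SetLike.ext_iff.1 h u.toMul
  exact ⟨m, (MulEquiv.prodMultiplicative _ _).symm.trans e.toAddEquiv.toMultiplicative, he⟩

lemma map_eq_one_of_forall_exists_pow_eq {G ι : Type*} [Group G]
    (φ : G →* Multiplicative (ι → ℤ)) {g : G} (hg : ∀ n : ℕ, n ≠ 0 → ∃ h, h ^ n = g) :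
    φ g = 1 := by
  refine Multiplicative.toAdd.injective <| funext fun i ↦ ?_
  obtain ⟨h, hh⟩ := hg (((φ g).toAdd i).natAbs + 1) (Nat.succ_ne_zero _)
  refine Int.eq_zero_of_abs_lt_dvd (m := (((φ g).toAdd i).natAbs + 1 : ℕ)) ⟨(φ h).toAdd i, ?_⟩
    (by push_cast; omega)
  conv_lhs => rw [← hh, map_pow]
  simp

lemma exists_unit_pow_eq {k : Type*} [Field k] [IsAlgClosed k] (c : kˣ) {n : ℕ} (hn : n ≠ 0) :
    ∃ z : kˣ, z ^ n = c := by
  obtain ⟨z, hz⟩ := IsAlgClosed.exists_pow_nat_eq (c : k) (Nat.pos_of_ne_zero hn)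
  have hz₀ : z ≠ 0 := fun h ↦ c.ne_zero (by rw [← hz, h, zero_pow hn])
  exact ⟨.mk0 z hz₀, Units.ext hz⟩

end Splitting

section Units

variable {k A : Type*} [Field k] [IsAlgClosed k] [CommRing A] [IsDomain A] [Algebra k A]

lemma mem_range_algebraMap_of_isIntegral {x : A} (hx : IsIntegral k x) :
    x ∈ (algebraMap k A).range :=
  minpoly.mem_range_of_degree_eq_one k x
    (IsAlgClosed.degree_eq_one_of_irreducible k (minpoly.irreducible hx))

lemma mem_range_unitsMap_algebraMap_of_isIntegral {u : Aˣ} (hu : IsIntegral k (u : A)) :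
    u ∈ (Units.map (algebraMap k A : k →* A)).range := by
  obtain ⟨c, hc⟩ := mem_range_algebraMap_of_isIntegral hu
  have hc₀ : c ≠ 0 := fun h ↦ u.ne_zero (by rw [← hc, h, map_zero])
  exact ⟨.mk0 c hc₀, Units.ext hc⟩

variable (k A) in
lemma exists_units_mulEquiv [CharZero k] [Algebra.FiniteType k A] :
    ∃ (m : ℕ) (e : kˣ × Multiplicative (Fin m → ℤ) ≃* Aˣ),
      ∀ c, e (c, 1) = Units.map (algebraMap k A : k →* A) c := by
  obtain ⟨ι, _, φ, hφ⟩ := exists_units_hom_of_finiteType k A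
  refine exists_mulEquiv_prod_of_ker_eq_range (Units.map_injective (algebraMap k A).injective)
    (φ := φ) (le_antisymm (fun u hu ↦ mem_range_unitsMap_algebraMap_of_isIntegral (hφ u hu)) ?_)
  rintro _ ⟨c, rfl⟩
  exact map_eq_one_of_forall_exists_pow_eq (φ.comp (Units.map (algebraMap k A : k →* A)))
    fun n hn ↦ exists_unit_pow_eq c hn

end Units

/-! ### Root covers and standard étale algebras -/

section MonicFamily

variable {𝕜 : Type*}

lemma norm_lt_add_one_of_isRoot [NormedField 𝕜] {q : 𝕜[X]} (hq : q.Monic) {M : ℝ}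
    (hM : 0 ≤ M) (hcoeff : ∀ i < q.natDegree, ‖q.coeff i‖ ≤ M) {z : 𝕜} (hz : q.IsRoot z) :
    ‖z‖ < M + 1 := by
  have hsup : (Finset.range q.natDegree).sup (‖q.coeff ·‖₊) ≤ M.toNNReal :=
    Finset.sup_le fun i hi ↦ NNReal.le_toNNReal_of_coe_le (hcoeff i (Finset.mem_range.1 hi))
  have hlt : ‖z‖₊ < M.toNNReal + 1 := by
    refine (hz.norm_lt_cauchyBound hq.ne_zero).trans_le ?_
    rw [cauchyBound, hq.leadingCoeff, nnnorm_one, div_one]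
    gcongr
  simpa [hM] using NNReal.coe_lt_coe.2 hlt

/-- The monic polynomial `X ^ d + v (d - 1) X ^ (d - 1) + ⋯ + v 0`. -/
noncomputable def monicOfFn [CommRing 𝕜] {d : ℕ} (v : Fin d → 𝕜) : 𝕜[X] :=
  X ^ d + ∑ i : Fin d, C (v i) * X ^ (i : ℕ)

lemma degree_sum_C_mul_X_pow_lt [CommRing 𝕜] {d : ℕ} (v : Fin d → 𝕜) :
    (∑ i : Fin d, C (v i) * X ^ (i : ℕ)).degree < (d : WithBot ℕ) :=
  (degree_sum_le _ _).trans_lt <| (Finset.sup_lt_iff (WithBot.bot_lt_coe d)).2 fun i _ ↦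
    (degree_C_mul_X_pow_le _ _).trans_lt (Nat.cast_lt.2 i.2)

lemma monic_monicOfFn [CommRing 𝕜] {d : ℕ} (v : Fin d → 𝕜) : (monicOfFn v).Monic :=
  monic_X_pow_add (degree_sum_C_mul_X_pow_lt v)

lemma natDegree_monicOfFn [CommRing 𝕜] [Nontrivial 𝕜] {d : ℕ} (v : Fin d → 𝕜) :
    (monicOfFn v).natDegree = d := by
  refine natDegree_eq_of_degree_eq_some ?_
  rw [monicOfFn, degree_add_eq_left_of_degree_lt] <;>
    simp only [degree_X_pow, degree_sum_C_mul_X_pow_lt]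

lemma coeff_monicOfFn [CommRing 𝕜] {d : ℕ} (v : Fin d → 𝕜) (i : Fin d) :
    (monicOfFn v).coeff i = v i := by
  simp [monicOfFn, coeff_X_pow, i.2.ne, Fin.val_inj]

lemma eval_monicOfFn [CommRing 𝕜] {d : ℕ} (v : Fin d → 𝕜) (z : 𝕜) :
    (monicOfFn v).eval z = z ^ d + ∑ i : Fin d, v i * z ^ (i : ℕ) := by
  simp [monicOfFn, eval_finsetSum]

lemma monicOfFn_coeff [CommRing 𝕜] {d : ℕ} {q : 𝕜[X]} (hq : q.Monic)
    (hd : q.natDegree = d) : monicOfFn (fun i : Fin d ↦ q.coeff i) = q := by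
  rw [monicOfFn, Fin.sum_univ_eq_sum_range fun i ↦ C (q.coeff i) * X ^ i, ← hd]
  exact hq.as_sum.symm

variable [NontriviallyNormedField 𝕜] {d : ℕ}

variable (𝕜 d) in
/-- The family of all monic polynomials of degree `d`, as a map over the space of their
coefficients. -/
noncomputable def monicFamily (p : (Fin d → 𝕜) × 𝕜) : (Fin d → 𝕜) × 𝕜 :=
  (p.1, (monicOfFn p.1).eval p.2)

lemma continuous_monicFamily : Continuous (monicFamily 𝕜 d) := by
  unfold monicFamily
  simp only [eval_monicOfFn]
  fun_prop

lemma isRoot_of_monicFamily_eq {v : Fin d → 𝕜} {z : 𝕜} {y : (Fin d → 𝕜) × 𝕜}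
    (h : monicFamily 𝕜 d (v, z) = y) : (monicOfFn y.1 - C y.2).IsRoot z := by
  subst h
  simp [monicFamily]

lemma monic_monicOfFn_sub_C (hd : d ≠ 0) (v : Fin d → 𝕜) (w : 𝕜) : (monicOfFn v - C w).Monic := by
  refine (monic_monicOfFn v).sub_of_left ?_
  rw [degree_eq_natDegree (monic_monicOfFn v).ne_zero, natDegree_monicOfFn]
  exact degree_C_le.trans_lt (by exact_mod_cast Nat.pos_of_ne_zero hd)

lemma finite_preimage_monicFamily (hd : d ≠ 0) (y : (Fin d → 𝕜) × 𝕜) :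
    (monicFamily 𝕜 d ⁻¹' {y}).Finite := by
  refine (((monicOfFn y.1 - C y.2).rootSet_finite 𝕜).image (Prod.mk y.1)).subset ?_
  rintro ⟨v, z⟩ h
  refine ⟨z, ?_, Prod.ext (congr_arg Prod.fst h).symm rfl⟩
  rw [mem_rootSet_of_ne (monic_monicOfFn_sub_C hd _ _).ne_zero, coe_aeval_eq_eval]
  exact isRoot_of_monicFamily_eq h

lemma isProperMap_monicFamily [ProperSpace 𝕜] (hd : d ≠ 0) : IsProperMap (monicFamily 𝕜 d) := by
  refine isProperMap_iff_isCompact_preimage.2 ⟨continuous_monicFamily, fun K hK ↦ ?_⟩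
  obtain ⟨M, hM0, hM⟩ := hK.isBounded.exists_pos_norm_le
  refine Metric.isCompact_of_isClosed_isBounded (hK.isClosed.preimage continuous_monicFamily) ?_
  refine (Metric.isBounded_closedBall (x := 0) (r := (M + M) + 1)).subset ?_
  rintro ⟨v, z⟩ hp
  obtain ⟨hv, hw⟩ := norm_prod_le_iff.1 (hM _ hp)
  have hz : ‖z‖ < (M + M) + 1 := by
    refine norm_lt_add_one_of_isRoot (monic_monicOfFn_sub_C hd v _) (by positivity)
      (fun i hi ↦ ?_) (isRoot_of_monicFamily_eq (y := monicFamily 𝕜 d (v, z)) rfl)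
    have hi : i < d := by rwa [natDegree_sub_C, natDegree_monicOfFn] at hi
    rw [coeff_sub, coeff_monicOfFn v ⟨i, hi⟩, coeff_C]
    refine (norm_sub_le _ _).trans (add_le_add ((norm_le_pi_norm v ⟨i, hi⟩).trans hv) ?_)
    split_ifs
    · exact hw
    · simpa using hM0.le
  exact mem_closedBall_zero_iff.2 (norm_prod_le_iff.2 ⟨hv.trans (by linarith), hz.le⟩)

lemma isLocalHomeomorphOn_monicFamily [CompleteSpace 𝕜] :
    IsLocalHomeomorphOn (monicFamily 𝕜 d) {p | (monicOfFn p.1).derivative.eval p.2 ≠ 0} := by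
  rintro ⟨v, z⟩ (hz : (monicOfFn v).derivative.eval z ≠ 0)
  have hg : HasStrictFDerivAt (fun p : (Fin d → 𝕜) × 𝕜 ↦ (monicOfFn p.1).eval p.2)
      (fderiv 𝕜 (fun p ↦ (monicOfFn p.1).eval p.2) (v, z)) (v, z) := by
    refine AnalyticAt.hasStrictFDerivAt ?_
    simp only [eval_monicOfFn]
    exact (analyticAt_snd.fun_pow d).fun_add <| Finset.univ.analyticAt_fun_sum fun i _ ↦
      (((ContinuousLinearMap.proj (R := 𝕜) i).comp
        (.fst 𝕜 (Fin d → 𝕜) 𝕜)).analyticAt (v, z)).fun_mul (analyticAt_snd.fun_pow i)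
  set L := fderiv 𝕜 (fun p : (Fin d → 𝕜) × 𝕜 ↦ (monicOfFn p.1).eval p.2) (v, z)
  have hL : L (0, 1) = (monicOfFn v).derivative.eval z :=
    (hg.hasFDerivAt.comp_hasDerivAt z ((hasDerivAt_const z v).prodMk (hasDerivAt_id z))).unique
      ((monicOfFn v).hasDerivAt z)
  let e : ((Fin d → 𝕜) × 𝕜) ≃L[𝕜] (Fin d → 𝕜) × 𝕜 :=
    (ContinuousLinearEquiv.refl 𝕜 _).skewProd
      (ContinuousLinearEquiv.unitsEquivAut 𝕜 (Units.mk0 _ hz)) (L.comp (.inl 𝕜 _ _))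
  have he : HasStrictFDerivAt (monicFamily 𝕜 d) (e : _ →L[𝕜] _) (v, z) := by
    convert! hasStrictFDerivAt_fst.prodMk hg using 1
    ext p
    all_goals simp [e, ← hL, map_zero]
  exact ⟨_, he.mem_toOpenPartialHomeomorph_source, by simp⟩

lemma isCoveringMapOn_monicFamily [ProperSpace 𝕜] (hd : d ≠ 0) :
    IsCoveringMapOn (monicFamily 𝕜 d)
      {y | ∀ z, (monicOfFn y.1).eval z = y.2 → (monicOfFn y.1).derivative.eval z ≠ 0} :=
  (isProperMap_monicFamily hd).isClosedMap.isCoveringMapOn_of_isLocalHomeomorphOn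
    (fun y _ ↦ finite_preimage_monicFamily hd y)
    fun p hp ↦ isLocalHomeomorphOn_monicFamily p (hp p.2 rfl)

lemma existsUnique_continuousMap_isRoot [ProperSpace 𝕜] {T : Type*} [TopologicalSpace T]
    [SimplyConnectedSpace T] [LocallyPathConnectedSpace T] (q : T → 𝕜[X])
    (hq : ∀ t, (q t).Monic) (hdeg : ∀ t, (q t).natDegree = d)
    (hcont : ∀ i, Continuous fun t ↦ (q t).coeff i) (hsep : ∀ t, (q t).Separable)
    (t₀ : T) (z₀ : 𝕜) (hz₀ : (q t₀).IsRoot z₀) :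
    ∃! z : C(T, 𝕜), z t₀ = z₀ ∧ ∀ t, (q t).IsRoot (z t) := by
  have hd : d ≠ 0 := fun h ↦ by
    rw [(hq t₀).natDegree_eq_zero.1 ((hdeg t₀).trans h)] at hz₀
    exact not_isRoot_C 1 z₀ one_ne_zero hz₀
  let v (t : T) (i : Fin d) : 𝕜 := (q t).coeff i
  have hv (t : T) : monicOfFn (v t) = q t := monicOfFn_coeff (hq t) (hdeg t)
  let σ : C(T, (Fin d → 𝕜) × 𝕜) := ⟨fun t ↦ (v t, 0), by fun_prop⟩
  obtain ⟨F, ⟨hF₀, hF⟩, huniq⟩ :=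
    (isCoveringMapOn_monicFamily hd).existsUnique_continuousMap_lifts σ (a₀ := t₀)
      (e₀ := (v t₀, z₀)) (Prod.ext rfl (by simpa [monicFamily, hv] using! hz₀)) fun t z hz ↦ by
        have hz : (q t).IsRoot z := by simpa [σ, hv] using! hz
        simpa [σ, hv] using (hsep t).aeval_derivative_ne_zero hz
  have hF₁ (t : T) : (F t).1 = v t := congr_arg Prod.fst (congr_fun hF t)
  refine ⟨⟨fun t ↦ (F t).2, by fun_prop⟩, ⟨by simp [hF₀], fun t ↦ ?_⟩, fun z ⟨hz₀, hz⟩ ↦ ?_⟩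
  · rw [← hv, ← hF₁]
    exact congr_arg Prod.snd (congr_fun hF t)
  · have := huniq ⟨fun t ↦ (v t, z t), by fun_prop⟩ ⟨Prod.ext rfl hz₀, funext fun t ↦
      Prod.ext rfl (by simpa [monicFamily, hv] using! hz t)⟩
    ext t
    simp [← this]

end MonicFamily

section StandardEtale

open scoped nonZeroDivisors IntermediateField Pointwise

/-- `A` is standard étale over `R` with coordinate `θ` away from the hypersurface `D = 0`: the
element `θ` is integral, its minimal polynomial is separable wherever `D` does not vanish (as
witnessed by a Bézout identity over `R`), and `θ` generates `A` over `R` once `D` is inverted. -/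
structure IsStandardEtaleAway {R A : Type*} [CommRing R] [CommRing A] [Algebra R A]
    (θ : A) (D : R) : Prop where
  isIntegral : IsIntegral R θ
  exists_bezout : ∃ u v : R[X], u * minpoly R θ + v * derivative (minpoly R θ) = C D
  exists_pow_smul_mem_adjoin : ∀ a : A, ∃ k : ℕ, D ^ k • a ∈ Algebra.adjoin R {θ}

lemma exists_smul_eq_algebraMap_isIntegral (R : Type*) {A K : Type*} [CommRing R] [IsDomain R]
    [CommRing A] [NoZeroDivisors A] [Algebra R A] [FaithfulSMul R A] [Algebra.IsAlgebraic R A]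
    [CommRing K] [Algebra A K] [IsFractionRing A K] [Algebra R K] [IsScalarTower R A K] (α : K) :
    ∃ r : R, r ≠ 0 ∧ ∃ θ : A, IsIntegral R θ ∧ r • α = algebraMap A K θ := by
  obtain ⟨⟨a, _, s, hs, rfl⟩, ha⟩ := IsLocalization.surj (Algebra.algebraMapSubmonoid A R⁰) α
  obtain ⟨r, hr, hint⟩ := (Algebra.IsAlgebraic.isAlgebraic (R := R) a).exists_integral_multiple
  refine ⟨r * s, mul_ne_zero hr (nonZeroDivisors.ne_zero hs), r • a, hint, ?_⟩
  rw [mul_smul, Algebra.smul_def s, IsScalarTower.algebraMap_apply R A K, mul_comm, ha,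
    ← IsScalarTower.toAlgHom_apply R A K, ← map_smul, IsScalarTower.toAlgHom_apply]

lemma exists_isIntegral_adjoin_eq_top (R F A K : Type*) [CommRing R] [IsDomain R] [Field F]
    [Algebra R F] [IsFractionRing R F] [CommRing A] [IsDomain A] [Algebra R A] [FaithfulSMul R A]
    [Algebra.IsAlgebraic R A] [Field K] [Algebra A K] [IsFractionRing A K] [Algebra R K]
    [IsScalarTower R A K] [Algebra F K] [IsScalarTower R F K] [FiniteDimensional F K]
    [Algebra.IsSeparable F K] : ∃ θ : A, IsIntegral R θ ∧ F⟮algebraMap A K θ⟯ = ⊤ := by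
  obtain ⟨α, hα⟩ := Field.exists_primitive_element F K
  obtain ⟨r, hr, θ, hθ, hrα⟩ := exists_smul_eq_algebraMap_isIntegral R (A := A) α
  refine ⟨θ, hθ, ?_⟩
  rw [← top_le_iff, ← hα, IntermediateField.adjoin_simple_le_iff, ← hrα,
    ← algebraMap_smul F r α]
  have hr0 : algebraMap R F r ≠ 0 := by
    simpa using hr
  simpa only [inv_smul_smul₀ hr0] using IntermediateField.smul_mem F⟮algebraMap R F r • α⟯
    (IntermediateField.mem_adjoin_simple_self F _) (x := (algebraMap R F r)⁻¹)

lemma exists_mul_add_mul_eq_C_of_isCoprime_map {R F : Type*} [CommRing R] [IsDomain R] [Field F]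
    [Algebra R F] [IsFractionRing R F] {f g : R[X]}
    (h : IsCoprime (f.map (algebraMap R F)) (g.map (algebraMap R F))) :
    ∃ D : R, D ≠ 0 ∧ ∃ u v : R[X], u * f + v * g = C D := by
  obtain ⟨u, v, huv⟩ := h
  obtain ⟨b, hb, hu⟩ := IsLocalization.integerNormalization_spec R⁰ u
  obtain ⟨c, hc, hv⟩ := IsLocalization.integerNormalization_spec R⁰ v
  refine ⟨b * c, mul_ne_zero (nonZeroDivisors.ne_zero hb) (nonZeroDivisors.ne_zero hc),
    C c * IsLocalization.integerNormalization R⁰ u,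
    C b * IsLocalization.integerNormalization R⁰ v, ?_⟩
  apply Polynomial.map_injective (algebraMap R F) (IsFractionRing.injective R F)
  simp only [Polynomial.map_add, Polynomial.map_mul, hu, hv, map_C, Algebra.smul_def,
    Polynomial.algebraMap_apply, map_mul]
  linear_combination (C (algebraMap R F b) * C (algebraMap R F c)) * huv

lemma exists_mul_minpoly_add_mul_derivative_eq_C {R A : Type*} [CommRing R] [IsDomain R]
    [IsIntegrallyClosed R] [CharZero R] [CommRing A] [IsDomain A] [Algebra R A] [FaithfulSMul R A]
    {θ : A} (hθ : IsIntegral R θ) :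
    ∃ D : R, D ≠ 0 ∧
      ∃ u v : R[X], u * minpoly R θ + v * derivative (minpoly R θ) = C D := by
  let F := FractionRing R
  let K := FractionRing A
  let _ : Algebra F K := FractionRing.liftAlgebra R K
  have : IsScalarTower R F K := FractionRing.isScalarTower_liftAlgebra R K
  have : CharZero F := charZero_of_injective_algebraMap (IsFractionRing.injective R F)
  have hθF : IsIntegral F (algebraMap A K θ) := hθ.algebraMap.tower_top
  have hsep : (minpoly F (algebraMap A K θ)).Separable := (minpoly.irreducible hθF).separable
  rw [minpoly.isIntegrallyClosed_eq_field_fractions F K hθ, Polynomial.Separable,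
    derivative_map] at hsep
  exact exists_mul_add_mul_eq_C_of_isCoprime_map hsep

lemma exists_forall_exists_pow_smul_mem {R A : Type*} [CommRing R] [CommRing A] [Algebra R A]
    [Algebra.FiniteType R A] (M : Submonoid R) (B : Subalgebra R A)
    (h : ∀ a : A, ∃ d : M, d • a ∈ B) : ∃ D : M, ∀ a : A, ∃ k : ℕ, D ^ k • a ∈ B := by
  choose d hd using h
  obtain ⟨S, hS⟩ := Algebra.FiniteType.out (R := R) (A := A)
  let D : M := ∏ s ∈ S, d s
  have hDS : (D : R) • (S : Set A) ⊆ B := by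
    rintro _ ⟨s, hs, rfl⟩
    obtain ⟨e, he⟩ := Finset.dvd_prod_of_mem d hs
    change (D : R) • s ∈ B
    rw [show (D : R) = e * d s by simp [D, he, mul_comm], mul_smul]
    exact B.smul_mem (hd s) _
  refine ⟨D, fun a ↦ ?_⟩
  obtain ⟨k, hk⟩ := Algebra.pow_smul_mem_of_smul_subset_of_mem_adjoin (D : R) (S : Set A) B hDS
    (hS ▸ Algebra.mem_top : a ∈ Algebra.adjoin R (S : Set A)) (B.algebraMap_mem _)
  exact ⟨k, hk k le_rfl⟩

lemma exists_smul_mem_adjoin_of_adjoin_eq_top {R F A K : Type*} [CommRing R] [Field F]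
    [Algebra R F] [IsFractionRing R F] [CommRing A] [Algebra R A] [Field K] [Algebra A K]
    [FaithfulSMul A K] [Algebra R K] [IsScalarTower R A K] [Algebra F K] [IsScalarTower R F K]
    [Algebra.IsAlgebraic F K] {θ : A} (hθ : F⟮algebraMap A K θ⟯ = ⊤) (a : A) :
    ∃ d : R⁰, d • a ∈ Algebra.adjoin R {θ} := by
  have ha : algebraMap A K a ∈ Algebra.adjoin F {algebraMap A K θ} := by
    rw [Algebra.adjoin_eq_top_of_primitive_element (Algebra.IsAlgebraic.isAlgebraic _) hθ]
    exact Algebra.mem_top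
  obtain ⟨d, hd⟩ := multiple_mem_adjoin_of_mem_localization_adjoin R⁰ F _ _ ha
  rw [← Set.image_singleton, ← IsScalarTower.coe_toAlgHom' R, ← AlgHom.map_adjoin,
    Submonoid.smul_def, ← map_smul] at hd
  obtain ⟨b, hb, hba⟩ := hd
  refine ⟨d, ?_⟩
  rwa [Submonoid.smul_def, ← FaithfulSMul.algebraMap_injective A K hba]

lemma exists_isStandardEtaleAway (R A : Type*) [CommRing R] [IsDomain R] [IsIntegrallyClosed R]
    [CharZero R] [CommRing A] [IsDomain A] [Algebra R A] [FaithfulSMul R A]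
    [Algebra.IsAlgebraic R A] [Algebra.FiniteType R A] :
    ∃ (θ : A) (D : R), D ≠ 0 ∧ IsStandardEtaleAway θ D := by
  let F := FractionRing R
  let K := FractionRing A
  let _ : Algebra F K := FractionRing.liftAlgebra R K
  have : IsScalarTower R F K := FractionRing.isScalarTower_liftAlgebra R K
  have : CharZero F := charZero_of_injective_algebraMap (IsFractionRing.injective R F)
  have : Algebra.IsAlgebraic A K := IsLocalization.isAlgebraic K A⁰
  have : Algebra.IsAlgebraic R K := .trans R A K
  have : Algebra.IsAlgebraic F K := .extendScalars (IsFractionRing.injective R F)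
  have : Algebra.EssFiniteType A K := .of_isLocalization K A⁰
  have : Algebra.EssFiniteType R K := .comp R A K
  have : Algebra.EssFiniteType F K := .of_comp R F K
  have : Module.Finite F K := Algebra.finite_of_essFiniteType_of_isAlgebraic
  obtain ⟨θ, hθ, htop⟩ := exists_isIntegral_adjoin_eq_top R F A K
  obtain ⟨D₁, hD₁, u, v, huv⟩ := exists_mul_minpoly_add_mul_derivative_eq_C hθ
  obtain ⟨D₂, hD₂⟩ := exists_forall_exists_pow_smul_mem R⁰ (Algebra.adjoin R {θ}) fun a ↦
    exists_smul_mem_adjoin_of_adjoin_eq_top htop a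
  refine ⟨θ, D₁ * D₂, mul_ne_zero hD₁ (nonZeroDivisors.ne_zero D₂.2), hθ,
    ⟨C (D₂ : R) * u, C (D₂ : R) * v, ?_⟩, fun a ↦ ?_⟩
  · rw [C_mul, ← huv]
    ring
  · obtain ⟨k, hk⟩ := hD₂ a
    refine ⟨k, ?_⟩
    simpa only [mul_pow, mul_smul, Submonoid.smul_def, SubmonoidClass.coe_pow] using
      Subalgebra.smul_mem _ hk (D₁ ^ k)

end StandardEtale

section LiftingPoints

variable {R A k : Type*} [CommRing R] [CommRing A] [Algebra R A] [Field k] [Algebra R k]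

lemma nonempty_algHom_of_isIntegral [FaithfulSMul R A] [Algebra.IsIntegral R A] [IsAlgClosed k] :
    Nonempty (A →ₐ[R] k) := by
  let p := RingHom.ker (algebraMap R k)
  have : p.IsPrime := RingHom.ker_isPrime _
  obtain ⟨⟨Q, hQ, hQp⟩⟩ := Ideal.nonempty_primesOver (S := A) p
  let _ : Algebra (R ⧸ p) k := (algebraMap R k).kerLift.toAlgebra
  have : FaithfulSMul (R ⧸ p) k :=
    (faithfulSMul_iff_algebraMap_injective _ _).2 (algebraMap R k).kerLift_injective
  have : Module.IsTorsionFree (R ⧸ p) (A ⧸ Q) := .trans_faithfulSMul (R ⧸ p) (A ⧸ Q) (A ⧸ Q)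
  let ψ : A ⧸ Q →ₐ[R ⧸ p] k := IsAlgClosed.lift
  exact ⟨{ ψ.toRingHom.comp (Ideal.Quotient.mk Q) with
    commutes' := fun r ↦ ψ.commutes (Ideal.Quotient.mk p r) }⟩

lemma isLocalization_away_of_forall_exists_pow_smul_mem {B : Subalgebra R A} {D : R}
    (hB : ∀ a : A, ∃ n : ℕ, D ^ n • a ∈ B) (L : Type*) [CommRing L] [Algebra A L]
    [IsLocalization.Away (algebraMap R A D) L] :
    IsLocalization.Away (algebraMap R B D) L where
  map_units := by
    rintro ⟨_, n, rfl⟩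
    rw [IsScalarTower.algebraMap_apply B A L]
    exact IsLocalization.map_units L (⟨_, n, by simp⟩ : Submonoid.powers (algebraMap R A D))
  surj z := by
    obtain ⟨⟨a, _, n, rfl⟩, hz⟩ := IsLocalization.surj (Submonoid.powers (algebraMap R A D)) z
    obtain ⟨m, hm⟩ := hB a
    refine ⟨⟨⟨_, hm⟩, _, n + m, rfl⟩, ?_⟩
    change z * algebraMap A L (algebraMap R A D ^ n) = algebraMap A L a at hz
    change z * algebraMap A L (algebraMap R A D ^ (n + m)) = algebraMap A L (D ^ m • a)
    rw [pow_add, map_mul, ← mul_assoc, hz, Algebra.smul_def, mul_comm, ← map_mul, map_pow]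
  exists_of_eq {x y} hxy := by
    rw [IsScalarTower.algebraMap_apply B A L, IsScalarTower.algebraMap_apply B A L] at hxy
    obtain ⟨⟨_, n, rfl⟩, hn⟩ :=
      IsLocalization.exists_of_eq (M := Submonoid.powers (algebraMap R A D)) hxy
    exact ⟨⟨_, n, rfl⟩, Subtype.ext (by simpa using hn)⟩

lemma exists_algHom_extending {B : Subalgebra R A} {D : R}
    (hB : ∀ a : A, ∃ n : ℕ, D ^ n • a ∈ B) (hD : algebraMap R k D ≠ 0) (φ : B →ₐ[R] k) :
    ∃ ψ : A →ₐ[R] k, ∀ b : B, ψ b = φ b := by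
  let L := Localization.Away (algebraMap R A D)
  have : IsLocalization.Away (algebraMap R B D) L :=
    isLocalization_away_of_forall_exists_pow_smul_mem hB L
  have hunit : IsUnit (φ.toRingHom (algebraMap R B D)) := by
    simpa using hD
  let Ψ : L →+* k := IsLocalization.Away.lift (algebraMap R B D) hunit
  have hΨ (b : B) : Ψ (algebraMap A L b) = φ b :=
    IsLocalization.Away.lift_eq (algebraMap R B D) hunit b
  refine ⟨{ Ψ.comp (algebraMap A L) with commutes' := fun r ↦ ?_ }, hΨ⟩
  exact (hΨ (algebraMap R B r)).trans (φ.commutes r)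

namespace IsStandardEtaleAway

variable {θ : A} {D : R}

lemma algHom_ext (h : IsStandardEtaleAway θ D) (hD : algebraMap R k D ≠ 0) {φ ψ : A →ₐ[R] k}
    (hφψ : φ θ = ψ θ) : φ = ψ := by
  ext a
  obtain ⟨n, hn⟩ := h.exists_pow_smul_mem_adjoin a
  have heq : D ^ n • φ a = D ^ n • ψ a := by
    rw [← map_smul, ← map_smul]
    exact φ.eqOn_adjoin_iff.2 (Set.eqOn_singleton.2 hφψ) hn
  simpa [Algebra.smul_def, hD] using heq

lemma finite_algHom (h : IsStandardEtaleAway θ D) (hD : algebraMap R k D ≠ 0) :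
    Finite (A →ₐ[R] k) := by
  have hmaps (φ : A →ₐ[R] k) : φ θ ∈ (minpoly R θ).rootSet k := by
    rw [mem_rootSet']
    refine ⟨((minpoly.monic h.isIntegral).map _).ne_zero, ?_⟩
    rw [aeval_algHom_apply, minpoly.aeval, map_zero]
  exact .of_injective (fun φ ↦ (⟨φ θ, hmaps φ⟩ : (minpoly R θ).rootSet k)) fun φ ψ hφψ ↦
    h.algHom_ext hD (Subtype.ext_iff.1 hφψ)

lemma separable_map_minpoly (h : IsStandardEtaleAway θ D) (hD : algebraMap R k D ≠ 0) :
    ((minpoly R θ).map (algebraMap R k)).Separable := by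
  obtain ⟨u, v, huv⟩ := h.exists_bezout
  have hmap := congrArg (Polynomial.map (algebraMap R k)) huv
  rw [Polynomial.map_add, Polynomial.map_mul, Polynomial.map_mul, map_C, ← derivative_map] at hmap
  have hinv : C (algebraMap R k D)⁻¹ * C (algebraMap R k D) = 1 := by
    rw [← C_mul, inv_mul_cancel₀ hD, C_1]
  refine ⟨C (algebraMap R k D)⁻¹ * u.map (algebraMap R k),
    C (algebraMap R k D)⁻¹ * v.map (algebraMap R k), ?_⟩
  linear_combination C (algebraMap R k D)⁻¹ * hmap + hinv

end IsStandardEtaleAway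

variable [IsDomain R] [IsIntegrallyClosed R] [IsDomain A] [FaithfulSMul R A]

lemma exists_algHom_adjoin_apply_eq {θ : A} (hθ : IsIntegral R θ) {z : k}
    (hz : aeval z (minpoly R θ) = 0) :
    ∃ φ : Algebra.adjoin R {θ} →ₐ[R] k, φ ⟨θ, Algebra.self_mem_adjoin_singleton R θ⟩ = z := by
  obtain ⟨pb, hgen⟩ : ∃ pb : PowerBasis R (Algebra.adjoin R {θ}),
      pb.gen = ⟨θ, Algebra.self_mem_adjoin_singleton R θ⟩ :=
    ⟨_, Algebra.adjoin.powerBasis'_gen hθ⟩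
  have hmin : minpoly R pb.gen = minpoly R θ := by
    rw [hgen]
    exact (minpoly.algHom_eq (Algebra.adjoin R {θ}).val Subtype.val_injective _).symm
  refine ⟨pb.lift z (hmin ▸ hz), ?_⟩
  rw [← hgen, PowerBasis.lift_gen]

lemma exists_algHom_apply_eq [Algebra.IsIntegral R A] [IsAlgClosed k] {θ : A} {z : k}
    (hz : aeval z (minpoly R θ) = 0) : ∃ φ : A →ₐ[R] k, φ θ = z := by
  obtain ⟨φ, hφ⟩ := exists_algHom_adjoin_apply_eq (Algebra.IsIntegral.isIntegral θ) hz
  let _ : Algebra (Algebra.adjoin R {θ}) k := φ.toAlgebra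
  have : IsScalarTower R (Algebra.adjoin R {θ}) k := .of_algebraMap_eq' φ.comp_algebraMap.symm
  have : Algebra.IsIntegral (Algebra.adjoin R {θ}) A := .tower_top (R := R)
  obtain ⟨ψ⟩ := nonempty_algHom_of_isIntegral (R := Algebra.adjoin R {θ}) (A := A) (k := k)
  exact ⟨ψ.restrictScalars R, (ψ.commutes ⟨θ, _⟩).trans hφ⟩

namespace IsStandardEtaleAway

variable {θ : A} {D : R}

lemma exists_algHom_apply_eq (h : IsStandardEtaleAway θ D) (hD : algebraMap R k D ≠ 0) {z : k}
    (hz : aeval z (minpoly R θ) = 0) : ∃ φ : A →ₐ[R] k, φ θ = z := by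
  obtain ⟨φ, hφ⟩ := exists_algHom_adjoin_apply_eq h.isIntegral hz
  obtain ⟨ψ, hψ⟩ := exists_algHom_extending h.exists_pow_smul_mem_adjoin hD φ
  exact ⟨ψ, (hψ ⟨θ, _⟩).trans hφ⟩

end IsStandardEtaleAway

end LiftingPoints

/-! ### The space of complex points -/

/-- The complex points of the affine variety with coordinate ring `A`. -/
abbrev ComplexPoints (A : Type*) [CommRing A] [Algebra ℂ A] : Type _ := A →ₐ[ℂ] ℂ

/-- The classical topology on the complex points, realised as the topology of pointwise
convergence of all regular functions. -/
noncomputable abbrev complexPointsTopology (A : Type*) [CommRing A] [Algebra ℂ A] :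
    TopologicalSpace (ComplexPoints A) :=
  TopologicalSpace.induced (fun φ ↦ (φ : A → ℂ)) inferInstance

section ComplexPoints

attribute [local instance] complexPointsTopology

section Basic

variable {A : Type*} [CommRing A] [Algebra ℂ A]

lemma continuous_complexPoints_iff {Y : Type*} [TopologicalSpace Y] {f : Y → ComplexPoints A} :
    Continuous f ↔ ∀ a, Continuous fun y ↦ f y a :=
  continuous_induced_rng.trans continuous_pi_iff

lemma continuous_complexPoints_apply (a : A) : Continuous fun x : ComplexPoints A ↦ x a :=
  continuous_complexPoints_iff.1 continuous_id a

lemma tendsto_complexPoints_iff {Y : Type*} {f : Y → ComplexPoints A} {l : Filter Y}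
    {x : ComplexPoints A} : Tendsto f l (𝓝 x) ↔ ∀ a, Tendsto (fun y ↦ f y a) l (𝓝 (x a)) := by
  rw [nhds_induced, tendsto_comap_iff, tendsto_pi_nhds]
  rfl

instance t2Space_complexPoints : T2Space (ComplexPoints A) :=
  .of_injective_continuous DFunLike.coe_injective continuous_induced_dom

end Basic

section Restriction

variable {R A : Type*} [CommRing R] [Algebra ℂ R] [CommRing A] [Algebra ℂ A] [Algebra R A]
  [IsScalarTower ℂ R A]

lemma continuous_domRestrict :
    Continuous fun x : ComplexPoints A ↦ (x.domRestrict R : ComplexPoints R) :=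
  continuous_complexPoints_iff.2 fun r ↦ continuous_complexPoints_apply (algebraMap R A r)

lemma apply_aeval_eq_eval_map (x : ComplexPoints A) (θ : A) (G : R[X]) :
    x (aeval θ G) = (G.map (x.domRestrict R : R →+* ℂ)).eval (x θ) := by
  rw [aeval_def, ← AlgHom.coe_toRingHom, hom_eval₂, eval_map]
  rfl

lemma isRoot_map_minpoly (x : ComplexPoints A) (θ : A) :
    ((minpoly R θ).map (x.domRestrict R : R →+* ℂ)).IsRoot (x θ) := by
  rw [IsRoot, ← apply_aeval_eq_eval_map, minpoly.aeval, map_zero]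

end Restriction

namespace IsStandardEtaleAway

variable {R A : Type*} [CommRing R] [Algebra ℂ R] [CommRing A] [Algebra ℂ A] [Algebra R A]
  [IsScalarTower ℂ R A] {θ : A} {D : R}

lemma complexPoints_ext (h : IsStandardEtaleAway θ D) {x y : ComplexPoints A}
    (hxy : x.domRestrict R = y.domRestrict R) (hD : x.domRestrict R D ≠ 0) (hθ : x θ = y θ) :
    x = y := by
  let _ : Algebra R ℂ := (x.domRestrict R).toRingHom.toAlgebra
  let yR : A →ₐ[R] ℂ := { y with commutes' := fun r ↦ (DFunLike.congr_fun hxy r).symm }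
  have hxyR : x.extendScalars R = yR := h.algHom_ext hD hθ
  exact AlgHom.ext fun a ↦ DFunLike.congr_fun hxyR a

lemma finite_fiber_domRestrict (h : IsStandardEtaleAway θ D) {p : ComplexPoints R}
    (hp : p D ≠ 0) : {x : ComplexPoints A | x.domRestrict R = p}.Finite := by
  let _ : Algebra R ℂ := p.toRingHom.toAlgebra
  have : Finite (A →ₐ[R] ℂ) := h.finite_algHom hp
  refine (Set.finite_range fun φ : A →ₐ[R] ℂ ↦ algHomEquivSigma.symm ⟨p, φ⟩).subset ?_
  rintro x rfl
  exact ⟨x.extendScalars R, AlgHom.ext fun _ ↦ rfl⟩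

lemma continuous_complexPoints_of_domRestrict (h : IsStandardEtaleAway θ D) {T : Type*}
    [TopologicalSpace T] {γ : T → ComplexPoints A}
    (hγ : Continuous fun t ↦ ((γ t).domRestrict R : ComplexPoints R))
    (hD : ∀ t, (γ t).domRestrict R D ≠ 0) (hθ : Continuous fun t ↦ γ t θ) : Continuous γ := by
  refine continuous_complexPoints_iff.2 fun a ↦ ?_
  obtain ⟨n, hn⟩ := h.exists_pow_smul_mem_adjoin a
  rw [Algebra.adjoin_singleton_eq_range_aeval] at hn
  obtain ⟨G, hG⟩ := hn
  rw [continuous_complexPoints_iff] at hγ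
  have hcont : Continuous fun t ↦ γ t (aeval θ G) := by
    simp only [apply_aeval_eq_eval_map (R := R), eval_map, eval₂_eq_sum_range]
    exact continuous_finsetSum _ fun i _ ↦ (hγ _).mul (hθ.pow i)
  refine (hcont.div ((hγ D).pow n) fun t ↦ pow_ne_zero n (hD t)).congr fun t ↦ ?_
  have hGa : aeval θ G = D ^ n • a := hG
  rw [eq_comm, Pi.div_apply, Pi.pow_apply, eq_div_iff (pow_ne_zero n (hD t)), hGa,
    Algebra.smul_def, mul_comm, map_mul, map_pow, map_pow]
  rfl

variable [IsDomain R] [IsIntegrallyClosed R] [IsDomain A] [FaithfulSMul R A]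

lemma exists_complexPoints_apply_eq (h : IsStandardEtaleAway θ D) {p : ComplexPoints R}
    (hp : p D ≠ 0) {z : ℂ} (hz : ((minpoly R θ).map (p : R →+* ℂ)).IsRoot z) :
    ∃ x : ComplexPoints A, x.domRestrict R = p ∧ x θ = z := by
  let _ : Algebra R ℂ := p.toRingHom.toAlgebra
  obtain ⟨φ, hφ⟩ := h.exists_algHom_apply_eq hp ((eval_map_algebraMap _ _).symm.trans hz)
  exact ⟨algHomEquivSigma.symm ⟨p, φ⟩, AlgHom.ext φ.commutes, hφ⟩

lemma existsUnique_continuousMap_domRestrict_eq (h : IsStandardEtaleAway θ D) {T : Type*}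
    [TopologicalSpace T] [SimplyConnectedSpace T] [LocallyPathConnectedSpace T]
    (σ : C(T, ComplexPoints R)) (hσ : ∀ t, σ t D ≠ 0) (t₀ : T) (x₀ : ComplexPoints A)
    (hx₀ : x₀.domRestrict R = σ t₀) :
    ∃! γ : C(T, ComplexPoints A), γ t₀ = x₀ ∧ ∀ t, (γ t).domRestrict R = σ t := by
  have hmonic := minpoly.monic h.isIntegral
  obtain ⟨z, ⟨hz₀, hz⟩, hzuniq⟩ := existsUnique_continuousMap_isRoot
    (fun t ↦ (minpoly R θ).map (σ t : R →+* ℂ)) (fun t ↦ hmonic.map _)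
    (fun t ↦ hmonic.natDegree_map _)
    (fun i ↦ by simpa using continuous_complexPoints_iff.1 σ.continuous _)
    (fun t ↦ by
      let _ : Algebra R ℂ := (σ t).toRingHom.toAlgebra
      exact h.separable_map_minpoly (hσ t))
    t₀ (x₀ θ) (hx₀ ▸ isRoot_map_minpoly x₀ θ)
  choose γ hγσ hγθ using fun t ↦ h.exists_complexPoints_apply_eq (hσ t) (hz t)
  have hγ : Continuous γ := h.continuous_complexPoints_of_domRestrict
    (by simpa only [hγσ] using σ.continuous) (by simpa only [hγσ] using hσ)
    (by simpa only [hγθ] using z.continuous)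
  refine ⟨⟨γ, hγ⟩, ⟨?_, hγσ⟩, ?_⟩
  · exact h.complexPoints_ext ((hγσ t₀).trans hx₀.symm) ((hγσ t₀).symm ▸ hσ t₀)
      ((hγθ t₀).trans hz₀)
  · rintro γ' ⟨hγ'₀, hγ'σ⟩
    have hroot := hzuniq ⟨fun t ↦ γ' t θ, (continuous_complexPoints_apply θ).comp γ'.continuous⟩
      ⟨congrArg (· θ) hγ'₀, fun t ↦ hγ'σ t ▸ isRoot_map_minpoly (γ' t) θ⟩
    ext1 t
    exact h.complexPoints_ext ((hγ'σ t).trans (hγσ t).symm) (by simpa only [hγ'σ] using hσ t)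
      ((DFunLike.congr_fun hroot t).trans (hγθ t).symm)

end IsStandardEtaleAway

lemma exists_tendsto_complexPoints {A Y : Type*} [CommRing A] [Algebra ℂ A] {l : Filter Y}
    [l.NeBot] {γ : Y → ComplexPoints A} (h : ∀ a, ∃ c, Tendsto (fun u ↦ γ u a) l (𝓝 c)) :
    ∃ y, Tendsto γ l (𝓝 y) := by
  choose L hL using h
  let F : A →ₗ[ℂ] ℂ :=
    linearMapOfTendsto L (fun u ↦ (γ u).toLinearMap) (tendsto_pi_nhds.2 hL)
  refine ⟨AlgHom.ofLinearMap F ?_ ?_, tendsto_complexPoints_iff.2 hL⟩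
  · exact tendsto_nhds_unique (hL 1) (by simp)
  · exact fun a b ↦ tendsto_nhds_unique (hL (a * b)) (by simpa [F] using (hL a).mul (hL b))

lemma exists_separating_of_finite {A : Type*} [CommRing A] [Algebra ℂ A] (x : ComplexPoints A)
    {Y : Set (ComplexPoints A)} (hY : Y.Finite) : ∃ b, x b = 0 ∧ ∀ y ∈ Y, y ≠ x → y b = 1 := by
  have hpair (y : ComplexPoints A) : ∃ b, x b = 0 ∧ (y ≠ x → y b = 1) := by
    by_cases hy : y = x
    · exact ⟨0, map_zero _, fun h ↦ (h hy).elim⟩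
    obtain ⟨a, ha⟩ := DFunLike.ne_iff.1 hy
    exact ⟨(y a - x a)⁻¹ • (a - algebraMap ℂ A (x a)), by simp,
      fun _ ↦ by simpa using inv_mul_cancel₀ (sub_ne_zero.2 ha)⟩
  choose b hb₀ hb₁ using hpair
  refine ⟨1 - ∏ y ∈ hY.toFinset, (1 - b y), by simp [hb₀], fun y hy hyx ↦ ?_⟩
  rw [map_sub, map_one, map_prod, Finset.prod_eq_zero (hY.mem_toFinset.2 hy), sub_zero]
  rw [map_sub, map_one, hb₁ y hyx, sub_self]

section Integral

lemma exists_isRoot_norm_pow_natDegree_le {k : Type*} [NormedField k] [IsAlgClosed k] {q : k[X]}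
    (hq : q.Monic) (hd : q.natDegree ≠ 0) :
    ∃ z, q.IsRoot z ∧ ‖z‖₊ ^ q.natDegree ≤ ‖q.coeff 0‖₊ := by
  classical
  have hcard : q.roots.card = q.natDegree := IsAlgClosed.card_roots_eq_natDegree
  have hne : q.roots.toFinset.Nonempty := by
    rwa [Multiset.toFinset_nonempty, Ne, ← Multiset.card_eq_zero, hcard]
  obtain ⟨z, hz, hmin⟩ := q.roots.toFinset.exists_min_image (‖·‖₊) hne
  simp only [Multiset.mem_toFinset] at hz hmin
  have hprod : (q.roots.map nnnormHom).prod = ‖q.roots.prod‖₊ :=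
    (map_multiset_prod (nnnormHom (α := k)) _).symm
  refine ⟨z, isRoot_of_mem_roots hz, ?_⟩
  rw [(IsAlgClosed.splits q).coeff_zero_eq_prod_roots_of_monic hq, nnnorm_mul, nnnorm_pow,
    nnnorm_neg, nnnorm_one, one_pow, one_mul, ← hprod, ← hcard, ← Multiset.card_map nnnormHom]
  exact Multiset.pow_card_le_prod fun r hr ↦ by
    obtain ⟨s, hs, rfl⟩ := Multiset.mem_map.1 hr
    exact hmin s hs

variable {R A : Type*} [CommRing R] [Algebra ℂ R] [CommRing A] [Algebra ℂ A] [Algebra R A]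
  [IsScalarTower ℂ R A] [Algebra.IsIntegral R A]

lemma exists_eventually_norm_apply_le {Y : Type*} {l : Filter Y} {γ : Y → ComplexPoints A}
    {p : ComplexPoints R} (h : Tendsto (fun u ↦ ((γ u).domRestrict R : ComplexPoints R)) l (𝓝 p))
    (a : A) : ∃ M, ∀ᶠ u in l, ‖γ u a‖ ≤ M := by
  have hmonic := minpoly.monic (Algebra.IsIntegral.isIntegral (R := R) a)
  let M := ∑ i ∈ Finset.range (minpoly R a).natDegree, (‖p ((minpoly R a).coeff i)‖ + 1)
  have hbound : ∀ᶠ u in l, ∀ i ∈ Finset.range (minpoly R a).natDegree,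
      ‖(γ u).domRestrict R ((minpoly R a).coeff i)‖ ≤ ‖p ((minpoly R a).coeff i)‖ + 1 :=
    (eventually_all_finset _).2 fun i _ ↦
      ((tendsto_complexPoints_iff.1 h _).norm.eventually_lt_const (lt_add_one _)).mono
        fun _ ↦ le_of_lt
  refine ⟨M + 1, hbound.mono fun u hu ↦ ?_⟩
  refine (norm_lt_add_one_of_isRoot (hmonic.map _) (by positivity) (fun i hi ↦ ?_)
    (isRoot_map_minpoly (γ u) a)).le
  rw [hmonic.natDegree_map, ← Finset.mem_range] at hi
  rw [coeff_map]
  exact (hu i hi).trans <| Finset.single_le_sum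
    (f := fun i ↦ ‖p ((minpoly R a).coeff i)‖ + 1) (fun _ _ ↦ by positivity) hi

variable (R A) in
lemma isProperMap_domRestrict :
    IsProperMap fun x : ComplexPoints A ↦ (x.domRestrict R : ComplexPoints R) := by
  refine isProperMap_iff_ultrafilter.2 ⟨continuous_domRestrict, fun U p hU ↦ ?_⟩
  have hlim (a : A) : ∃ c, Tendsto (fun x : ComplexPoints A ↦ x a) U (𝓝 c) := by
    obtain ⟨M, hM⟩ := exists_eventually_norm_apply_le (γ := id) hU a
    obtain ⟨c, -, hc⟩ := (isCompact_closedBall (0 : ℂ) M).ultrafilter_le_nhds (U.map (· a))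
      (le_principal_iff.2 <| hM.mono fun _ ↦ mem_closedBall_zero_iff.2)
    exact ⟨c, hc⟩
  obtain ⟨y, hy⟩ := exists_tendsto_complexPoints (γ := id) hlim
  exact ⟨y, tendsto_nhds_unique (continuous_domRestrict.tendsto' y _ rfl |>.comp hy) hU, hy⟩

lemma finite_fiber_domRestrict [Algebra.FiniteType ℂ A] (p : ComplexPoints R) :
    {x : ComplexPoints A | x.domRestrict R = p}.Finite := by
  obtain ⟨S, hS⟩ := Algebra.FiniteType.out (R := ℂ) (A := A)
  let q (a : A) : ℂ[X] := (minpoly R a).map (p : R →+* ℂ)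
  have hq (a : A) : q a ≠ 0 :=
    ((minpoly.monic (Algebra.IsIntegral.isIntegral (R := R) a)).map _).ne_zero
  refine Set.Finite.of_injOn (f := fun x (s : S) ↦ x (s : A))
    (t := {f : S → ℂ | ∀ s : S, f s ∈ (q s).rootSet ℂ}) ?_ ?_
    (Set.Finite.pi' fun s ↦ rootSet_finite _ _)
  · rintro x rfl s
    rw [mem_rootSet, coe_aeval_eq_eval]
    exact ⟨hq s, isRoot_map_minpoly x (s : A)⟩
  · exact fun x _ y _ hxy ↦ AlgHom.ext_of_adjoin_eq_top hS fun s hs ↦ congrFun hxy ⟨s, hs⟩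

variable [IsDomain R] [IsIntegrallyClosed R] [IsDomain A] [FaithfulSMul R A]

lemma exists_domRestrict_eq_and_apply_eq {p : ComplexPoints R} {b : A} {z : ℂ}
    (hz : ((minpoly R b).map (p : R →+* ℂ)).IsRoot z) :
    ∃ x : ComplexPoints A, x.domRestrict R = p ∧ x b = z := by
  let _ : Algebra R ℂ := p.toRingHom.toAlgebra
  obtain ⟨φ, hφ⟩ := exists_algHom_apply_eq (k := ℂ) ((eval_map_algebraMap _ _).symm.trans hz)
  exact ⟨algHomEquivSigma.symm ⟨p, φ⟩, AlgHom.ext φ.commutes, hφ⟩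

lemma eventually_exists_domRestrict_eq_and_norm_lt {x : ComplexPoints A} {b : A} (hb : x b = 0)
    {ε : ℝ} (hε : 0 < ε) :
    ∀ᶠ p in 𝓝 (x.domRestrict R : ComplexPoints R),
      ∃ y : ComplexPoints A, y.domRestrict R = p ∧ ‖y b‖ < ε := by
  have hint := Algebra.IsIntegral.isIntegral (R := R) b
  have hmonic := minpoly.monic hint
  have hdeg := (minpoly.natDegree_pos hint).ne'
  have hcoeff : x.domRestrict R ((minpoly R b).coeff 0) = 0 := by
    simpa [IsRoot, hb, ← coeff_zero_eq_eval_zero] using isRoot_map_minpoly (R := R) x b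
  have hlim := (continuous_complexPoints_apply ((minpoly R b).coeff 0)).tendsto
    (x.domRestrict R : ComplexPoints R)
  rw [hcoeff] at hlim
  have hsmall := hlim.norm.eventually_lt_const
    (norm_zero.trans_lt (pow_pos hε (minpoly R b).natDegree))
  refine hsmall.mono fun p hp ↦ ?_
  obtain ⟨z, hz, hz_le⟩ := exists_isRoot_norm_pow_natDegree_le (hmonic.map (p : R →+* ℂ))
    (by rwa [hmonic.natDegree_map])
  rw [hmonic.natDegree_map, coeff_map] at hz_le
  obtain ⟨y, hy, rfl⟩ := exists_domRestrict_eq_and_apply_eq hz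
  exact ⟨y, hy, lt_of_pow_lt_pow_left₀ _ hε.le (lt_of_le_of_lt hz_le hp)⟩

variable (R A) in
lemma isOpenMap_domRestrict [Algebra.FiniteType ℂ A] :
    IsOpenMap fun x : ComplexPoints A ↦ (x.domRestrict R : ComplexPoints R) := by
  refine isOpenMap_iff_nhds_le.2 fun x U hU ↦ ?_
  obtain ⟨b, hxb, hb⟩ := exists_separating_of_finite x (finite_fiber_domRestrict (x.domRestrict R))
  have hfiber (y : ComplexPoints A) (hy : y.domRestrict R = x.domRestrict R) :
      ∀ᶠ y' in 𝓝 y, ‖y' b‖ < 1 / 2 → y'.domRestrict R ∈ U := by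
    rcases eq_or_ne y x with rfl | hyx
    · exact Eventually.mono hU fun _ h _ ↦ h
    · have hyb := (continuous_complexPoints_apply b).norm.tendsto y
      rw [hb y hy hyx, norm_one] at hyb
      exact (hyb.eventually_const_lt one_half_lt_one).mono fun _ h h' ↦ absurd h' h.not_gt
  have hclosed := (isProperMap_domRestrict R A).isClosedMap
  filter_upwards [hclosed.eventually_nhds_fiber _ hfiber,
    eventually_exists_domRestrict_eq_and_norm_lt hxb (one_half_pos (α := ℝ))]
  rintro p hp ⟨y, rfl, hyb⟩
  exact hp y rfl hyb

end Integral

end ComplexPoints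

lemma joined_of_tendsto_atTop {X : Type*} [TopologicalSpace X] {γ : ℝ → X} (hγ : Continuous γ)
    {x : X} (h : Tendsto γ atTop (𝓝 x)) : Joined x (γ 0) := by
  classical
  let η : ℝ → X := Function.update (fun t ↦ γ (|t|⁻¹ - 1)) 0 x
  have hη : Continuous η := by
    refine continuous_iff_continuousAt.2 fun t ↦ ?_
    rcases eq_or_ne t 0 with rfl | ht
    · exact continuousAt_update_same.2 <| h.comp <| tendsto_atTop_add_const_right _ _ <|
        tendsto_inv_nhdsGT_zero.comp tendsto_abs_nhdsNE_zero
    · refine (continuousAt_update_of_ne ht).2 (hγ.continuousAt.comp ?_)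
      exact (continuous_abs.continuousAt.inv₀ (abs_ne_zero.2 ht)).sub continuousAt_const
  exact ⟨⟨⟨fun t ↦ η t, by fun_prop⟩, by simp [η], by simp [η]⟩⟩

/- The finite fibre is cut by disjoint open sets into `{x}` and the rest; a preconnected tail of
`γ` lies in their union, and meets the neighbourhood of `x`. -/
lemma tendsto_nhds_of_mapClusterPt_of_finite_fiber {X Y T ι : Type*} [TopologicalSpace X]
    [T2Space X] [TopologicalSpace Y] [TopologicalSpace T] {f : X → Y} (hf : IsClosedMap f)
    {x : X} (hfin : (f ⁻¹' {f x}).Finite) {γ : T → X} (hγ : Continuous γ) {l : Filter T}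
    {p : ι → Prop} {s : ι → Set T} (hl : l.HasBasis p s) (hs : ∀ i, p i → IsPreconnected (s i))
    (hlim : Tendsto (f ∘ γ) l (𝓝 (f x))) (hx : MapClusterPt x l γ) : Tendsto γ l (𝓝 x) := by
  obtain ⟨V, W, hV, hW, hxV, hFW, hVW⟩ := SeparatedNhds.of_finite (Set.finite_singleton x)
    (hfin.sdiff (t := {x})) Set.disjoint_sdiff_right
  rw [Set.singleton_subset_iff] at hxV
  refine (nhds_basis_opens x).tendsto_right_iff.2 fun U ⟨hxU, hU⟩ ↦ ?_
  have hfiber : ∀ y ∈ f ⁻¹' {f x}, ∀ᶠ y' in 𝓝 y, y' ∈ U ∩ V ∪ W := fun y hy ↦ by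
    refine (((hU.inter hV).union hW).mem_nhds ?_)
    by_cases hyx : y = x
    · exact .inl (hyx ▸ ⟨hxU, hxV⟩)
    · exact .inr (hFW ⟨hy, hyx⟩)
  obtain ⟨i, hi, hsi⟩ := hl.eventually_iff.1 <|
    hlim.eventually (hf.eventually_nhds_fiber (f x) hfiber)
  obtain ⟨t, ht, hts⟩ := ((mapClusterPt_iff_frequently.1 hx _
    ((hU.inter hV).mem_nhds ⟨hxU, hxV⟩)).and_eventually (hl.mem_of_mem hi)).exists
  have himage : γ '' s i ⊆ U ∩ V := ((hs i hi).image γ hγ.continuousOn).subset_left_of_subset_union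
    (hU.inter hV) hW (hVW.mono_left Set.inter_subset_right)
    (Set.image_subset_iff.2 fun u hu ↦ hsi hu (γ u) rfl) ⟨γ t, ⟨t, hts, rfl⟩, ht⟩
  exact mem_of_superset (hl.mem_of_mem hi) fun u hu ↦ (himage ⟨u, hu, rfl⟩).1

lemma finite_setOf_eval_add_smul_eq_zero {k ι : Type*} [CommRing k] [IsDomain k]
    {D : MvPolynomial ι k} {v w : ι → k} {s₀ : k}
    (h : MvPolynomial.eval (v + s₀ • w) D ≠ 0) :
    {s : k | MvPolynomial.eval (v + s • w) D = 0}.Finite := by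
  let d : k[X] := MvPolynomial.aeval (fun i ↦ C (v i) + X * C (w i)) D
  have hd (s : k) : d.eval s = MvPolynomial.eval (v + s • w) D := by
    rw [← coe_aeval_eq_eval, MvPolynomial.comp_aeval_apply, ← MvPolynomial.aeval_eq_eval]
    simp only [map_add, map_mul, coe_aeval_eq_eval, eval_C, eval_X]
    rfl
  have hd₀ : d ≠ 0 := fun h₀ ↦ h (by rw [← hd, h₀, eval_zero])
  exact (finite_setOfPred_isRoot hd₀).subset fun s hs ↦ (hd s).trans hs

lemma exists_curve_eval_ne_zero {ι : Type*} {D : MvPolynomial ι ℂ} (hD : D ≠ 0) (v : ι → ℂ) :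
    ∃ c : ℝ → ι → ℂ, Continuous c ∧ Tendsto c atTop (𝓝 v) ∧
      ∀ t, MvPolynomial.eval (c t) D ≠ 0 := by
  obtain ⟨w, hw⟩ : ∃ w, MvPolynomial.eval w D ≠ 0 := by
    by_contra! h
    exact hD (MvPolynomial.funext fun w ↦ by rw [h, map_zero])
  have hfinite : {s : ℂ | MvPolynomial.eval (v + s • (w - v)) D = 0}.Finite :=
    finite_setOf_eval_add_smul_eq_zero (s₀ := 1) (by rwa [one_smul, add_sub_cancel])
  have hinv : Tendsto (fun r : ℝ ↦ (r : ℂ)⁻¹) atTop (𝓝[≠] 0) :=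
    tendsto_inv₀_cobounded'.comp (RCLike.tendsto_ofReal_atTop_cobounded ℂ)
  obtain ⟨N, hN⟩ := eventually_atTop.1 <|
    (hinv.eventually (hfinite.eventually_cofinite_notMem.filter_mono (nhdsNE_le_cofinite _))).and
      (eventually_gt_atTop 0)
  have hmax (t : ℝ) := hN (max t N) (le_max_right t N)
  refine ⟨fun t ↦ v + ((max t N : ℝ) : ℂ)⁻¹ • (w - v), ?_, ?_, fun t ↦ (hmax t).1⟩
  · have hne (t : ℝ) : ((max t N : ℝ) : ℂ) ≠ 0 := Complex.ofReal_ne_zero.2 (hmax t).2.ne'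
    fun_prop (disch := assumption)
  · have hlim := hinv.mono_right nhdsWithin_le_nhds |>.comp
      (tendsto_atTop_mono (le_max_left · N) tendsto_id)
    simpa using (hlim.smul_const (w - v)).const_add v

section ComplexPoints

attribute [local instance] complexPointsTopology

lemma continuous_aeval_complexPoints {ι : Type*} :
    Continuous fun v : ι → ℂ ↦ (MvPolynomial.aeval v : ComplexPoints (MvPolynomial ι ℂ)) :=
  continuous_complexPoints_iff.2 fun q ↦ MvPolynomial.continuous_eval q

namespace IsStandardEtaleAway

variable {R A : Type*} [CommRing R] [IsDomain R] [IsIntegrallyClosed R] [Algebra ℂ R]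
  [CommRing A] [IsDomain A] [Algebra ℂ A] [Algebra R A] [IsScalarTower ℂ R A] [FaithfulSMul R A]
  {θ : A} {D : R} {T : Type*} [TopologicalSpace T] [SimplyConnectedSpace T]
  [LocallyPathConnectedSpace T]

lemma finite_setOf_continuousMap_domRestrict_eq (h : IsStandardEtaleAway θ D)
    (σ : C(T, ComplexPoints R)) (hσ : ∀ t, σ t D ≠ 0) :
    {γ : C(T, ComplexPoints A) | ∀ t, (γ t).domRestrict R = σ t}.Finite := by
  obtain ⟨t₀⟩ : Nonempty T := inferInstance
  refine Set.Finite.of_injOn (f := fun γ ↦ γ t₀) (fun γ hγ ↦ hγ t₀) (fun γ hγ γ' hγ' heq ↦ ?_)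
    (h.finite_fiber_domRestrict (hσ t₀))
  exact (h.existsUnique_continuousMap_domRestrict_eq σ hσ t₀ (γ t₀) (hγ t₀)).unique
    ⟨rfl, hγ⟩ ⟨heq.symm, hγ'⟩

lemma exists_lift_mapClusterPt (h : IsStandardEtaleAway θ D)
    (hopen : IsOpenMap fun x : ComplexPoints A ↦ (x.domRestrict R : ComplexPoints R))
    (σ : C(T, ComplexPoints R)) (hσ : ∀ t, σ t D ≠ 0) {l : Filter T} [l.NeBot]
    {x : ComplexPoints A} (hx : Tendsto σ l (𝓝 (x.domRestrict R))) :
    ∃ γ : C(T, ComplexPoints A), (∀ t, (γ t).domRestrict R = σ t) ∧ MapClusterPt x l γ := by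
  by_contra! hne
  simp only [mapClusterPt_iff_frequently, not_forall, not_frequently, exists_prop] at hne
  choose! U hU hγU using hne
  have hfin := h.finite_setOf_continuousMap_domRestrict_eq σ hσ
  have himage := hopen.image_mem_nhds ((biInter_mem hfin).2 hU)
  obtain ⟨t, ⟨y, hyU, hyt⟩, ht⟩ :=
    ((hx.eventually himage).and ((eventually_all_finite hfin).2 hγU)).exists
  obtain ⟨γ, ⟨hγt, hγ⟩, -⟩ := h.existsUnique_continuousMap_domRestrict_eq σ hσ t y hyt
  exact ht γ hγ (hγt ▸ Set.mem_iInter₂.1 hyU γ hγ)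

end IsStandardEtaleAway

lemma exists_joined_domRestrict_apply_ne_zero {ι A : Type*} [CommRing A] [IsDomain A]
    [Algebra ℂ A] [Algebra.FiniteType ℂ A] [Algebra (MvPolynomial ι ℂ) A]
    [IsScalarTower ℂ (MvPolynomial ι ℂ) A] [FaithfulSMul (MvPolynomial ι ℂ) A]
    [Algebra.IsIntegral (MvPolynomial ι ℂ) A] (x : ComplexPoints A) {c : MvPolynomial ι ℂ}
    (hc : c ≠ 0) :
    ∃ y : ComplexPoints A, Joined x y ∧ y (algebraMap (MvPolynomial ι ℂ) A c) ≠ 0 := by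
  let R := MvPolynomial ι ℂ
  have : Algebra.FiniteType R A := .of_restrictScalars_finiteType ℂ R A
  obtain ⟨θ, D, hD, h⟩ := exists_isStandardEtaleAway R A
  let p : ComplexPoints R := x.domRestrict R
  obtain ⟨v, hv, hvx, hv₀⟩ := exists_curve_eval_ne_zero (mul_ne_zero hD hc) (p ∘ MvPolynomial.X)
  let σ : C(ℝ, ComplexPoints R) := ⟨_, continuous_aeval_complexPoints.comp hv⟩
  have hσ₀ (t : ℝ) : σ t D ≠ 0 ∧ σ t c ≠ 0 := by
    rw [← mul_ne_zero_iff, ← map_mul]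
    exact hv₀ t
  have hσx : Tendsto σ atTop (𝓝 p) := by
    rw [MvPolynomial.aeval_unique p]
    exact (continuous_aeval_complexPoints.tendsto _).comp hvx
  obtain ⟨γ, hγ, hγx⟩ := h.exists_lift_mapClusterPt (isOpenMap_domRestrict R A) σ
    (fun t ↦ (hσ₀ t).1) hσx
  have hlim : Tendsto γ atTop (𝓝 x) := tendsto_nhds_of_mapClusterPt_of_finite_fiber
    (isProperMap_domRestrict R A).isClosedMap (finite_fiber_domRestrict p) γ.continuous
    atTop_basis (fun _ _ ↦ isPreconnected_Ici) (hσx.congr fun t ↦ (hγ t).symm) hγx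
  exact ⟨γ 0, joined_of_tendsto_atTop γ.continuous hlim, fun h₀ ↦ (hσ₀ 0).2 (hγ 0 ▸ h₀)⟩

lemma exists_joined_apply_ne_zero {A : Type*} [CommRing A] [IsDomain A] [Algebra ℂ A]
    [Algebra.FiniteType ℂ A] (x : ComplexPoints A) {a : A} (ha : a ≠ 0) :
    ∃ y : ComplexPoints A, Joined x y ∧ y a ≠ 0 := by
  obtain ⟨n, g, hg, hgi⟩ := exists_integral_inj_algHom_of_fg ℂ A
  let R := MvPolynomial (Fin n) ℂ
  let _ : Algebra R A := g.toRingHom.toAlgebra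
  have : IsScalarTower ℂ R A := .of_algHom g
  have : FaithfulSMul R A := (faithfulSMul_iff_algebraMap_injective R A).2 hg
  have : Algebra.IsIntegral R A := ⟨hgi⟩
  obtain ⟨c, hc, b, hb⟩ := (Algebra.IsAlgebraic.isAlgebraic (R := R) a).exists_nonzero_dvd
    (mem_nonZeroDivisors_of_ne_zero ha)
  obtain ⟨y, hxy, hy⟩ := exists_joined_domRestrict_apply_ne_zero x hc
  rw [hb, map_mul] at hy
  exact ⟨y, hxy, left_ne_zero_of_mul hy⟩

end ComplexPoints

/-! ### Winding numbers -/

section WindingNumber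

open unitInterval

lemma isCoveringMap_mk0_exp :
    IsCoveringMap fun z : ℂ ↦ Units.mk0 (Complex.exp z) z.exp_ne_zero := by
  convert Complex.isCoveringMap_exp.homeomorph_comp unitsHomeomorphNeZero.symm
  rw [Function.comp_apply, Homeomorph.eq_symm_apply]
  rfl

variable {X : Type*} [TopologicalSpace X] (f g : C(X, ℂˣ)) {x y z : X}

/-- The increment of a continuous logarithm of `f` along the path `γ`; it is computed by the
logarithm starting at the principal value, but does not depend on this choice. -/
noncomputable def logIncrement (γ : Path x y) : ℂ :=
  isCoveringMap_mk0_exp.liftPath (f.comp γ) (Complex.log (f x))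
    (Units.ext (by simp [Complex.exp_log])) 1 - Complex.log (f x)

lemma exists_log_comp_of_exp_eq (γ : Path x y) {w : ℂ} (hw : Complex.exp w = f x) :
    ∃ L : C(I, ℂ), L 0 = w ∧ ∀ t, Complex.exp (L t) = f (γ t) := by
  have hw' : f.comp (γ : C(I, X)) 0 = Units.mk0 (Complex.exp w) w.exp_ne_zero :=
    Units.ext (by simp [hw])
  refine ⟨isCoveringMap_mk0_exp.liftPath (f.comp γ) w hw',
    isCoveringMap_mk0_exp.liftPath_zero _ _ hw', fun t ↦ ?_⟩
  exact congrArg Units.val (congrFun (isCoveringMap_mk0_exp.liftPath_lifts _ _ hw') t)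

lemma exists_log_comp (γ : Path x y) :
    ∃ L : C(I, ℂ), ∀ t, Complex.exp (L t) = f (γ t) :=
  (exists_log_comp_of_exp_eq f γ (Complex.exp_log (f x).ne_zero)).imp fun _ ↦ And.right

variable {f} in
lemma logIncrement_eq {γ : Path x y} (L : C(I, ℂ)) (hL : ∀ t, Complex.exp (L t) = f (γ t)) :
    logIncrement f γ = L 1 - L 0 := by
  have hexp : Complex.exp (Complex.log (f x) - L 0) = 1 := by
    rw [Complex.exp_sub, hL, γ.source, Complex.exp_log (f x).ne_zero, div_self (f x).ne_zero]
  have hshift : L + .const I (Complex.log (f x) - L 0) =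
      isCoveringMap_mk0_exp.liftPath (f.comp γ) (Complex.log (f x))
        (Units.ext (by simp [Complex.exp_log])) := by
    rw [isCoveringMap_mk0_exp.eq_liftPath_iff']
    exact ⟨funext fun t ↦ Units.ext (by simp [Complex.exp_add, hexp, hL]), by simp⟩
  rw [logIncrement, ← hshift, ContinuousMap.add_apply, ContinuousMap.const_apply]
  ring

lemma logIncrement_trans (γ : Path x y) (γ' : Path y z) :
    logIncrement f (γ.trans γ') = logIncrement f γ + logIncrement f γ' := by
  obtain ⟨L, hL⟩ := exists_log_comp f γ
  obtain ⟨L', hL'₀, hL'⟩ := exists_log_comp_of_exp_eq f γ' (w := L 1) (by rw [hL, γ.target])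
  let P : Path (L 0) (L 1) := ⟨L, rfl, rfl⟩
  let P' : Path (L 1) (L' 1) := ⟨L', hL'₀, rfl⟩
  rw [logIncrement_eq L hL, logIncrement_eq L' hL',
    logIncrement_eq (P.trans P' : C(I, ℂ)) fun t ↦ ?_]
  · simp [hL'₀]
  · simp only [ContinuousMap.coe_coe, Path.trans_apply]
    split_ifs
    exacts [hL _, hL' _]

lemma logIncrement_symm (γ : Path x y) : logIncrement f γ.symm = -logIncrement f γ := by
  obtain ⟨L, hL⟩ := exists_log_comp f γ
  rw [logIncrement_eq L hL,
    logIncrement_eq (γ := γ.symm) (L.comp ⟨σ, continuous_symm⟩) fun t ↦ hL (σ t)]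
  simp

lemma logIncrement_mul (γ : Path x y) :
    logIncrement (f * g) γ = logIncrement f γ + logIncrement g γ := by
  obtain ⟨L, hL⟩ := exists_log_comp f γ
  obtain ⟨M, hM⟩ := exists_log_comp g γ
  rw [logIncrement_eq L hL, logIncrement_eq M hM,
    logIncrement_eq (L + M) fun t ↦ by simp [Complex.exp_add, hL, hM]]
  simp only [ContinuousMap.add_apply]
  ring

lemma logIncrement_eq_of_homotopic {γ γ' : Path x y} (h : γ.Homotopic γ') :
    logIncrement f γ = logIncrement f γ' :=
  congrArg (· - _) <| isCoveringMap_mk0_exp.liftPath_apply_one_eq_of_homotopicRel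
    (ContinuousMap.HomotopicRel.comp_continuousMap h f) _ _ _

lemma exists_logIncrement_eq_int_mul (γ : Path x x) :
    ∃ n : ℤ, logIncrement f γ = n * (2 * Real.pi * Complex.I) := by
  obtain ⟨L, hL⟩ := exists_log_comp f γ
  have hexp : Complex.exp (L 1) = Complex.exp (L 0) := by rw [hL, hL, γ.source, γ.target]
  obtain ⟨n, hn⟩ := Complex.exp_eq_exp_iff_exists_int.1 hexp
  exact ⟨n, by rw [logIncrement_eq L hL, hn, add_sub_cancel_left]⟩

/-- The winding number around `0` of a function without zeros along a loop. -/
noncomputable def windingNumber (γ : Path x x) : ℤ := (exists_logIncrement_eq_int_mul f γ).choose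

lemma logIncrement_eq_windingNumber_mul (γ : Path x x) :
    logIncrement f γ = windingNumber f γ * (2 * Real.pi * Complex.I) :=
  (exists_logIncrement_eq_int_mul f γ).choose_spec

variable {f} in
lemma windingNumber_eq_iff {γ : Path x x} {n : ℤ} :
    windingNumber f γ = n ↔ logIncrement f γ = n * (2 * Real.pi * Complex.I) := by
  rw [logIncrement_eq_windingNumber_mul, mul_left_inj' Complex.two_pi_I_ne_zero, Int.cast_inj]

lemma windingNumber_trans (γ γ' : Path x x) :
    windingNumber f (γ.trans γ') = windingNumber f γ + windingNumber f γ' := by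
  rw [windingNumber_eq_iff, logIncrement_trans, logIncrement_eq_windingNumber_mul,
    logIncrement_eq_windingNumber_mul, Int.cast_add, add_mul]

lemma windingNumber_mul (γ : Path x x) :
    windingNumber (f * g) γ = windingNumber f γ + windingNumber g γ := by
  rw [windingNumber_eq_iff, logIncrement_mul, logIncrement_eq_windingNumber_mul,
    logIncrement_eq_windingNumber_mul, Int.cast_add, add_mul]

lemma windingNumber_eq_of_homotopic {γ γ' : Path x x} (h : γ.Homotopic γ') :
    windingNumber f γ = windingNumber f γ' := by
  rw [windingNumber_eq_iff, logIncrement_eq_of_homotopic f h, logIncrement_eq_windingNumber_mul]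

variable {f} in
lemma exists_windingNumber_ne_zero_of_joined (h : Joined x y) {γ : Path y y}
    (hγ : windingNumber f γ ≠ 0) : ∃ γ' : Path x x, windingNumber f γ' ≠ 0 := by
  obtain ⟨δ⟩ := h
  refine ⟨δ.trans (γ.trans δ.symm), ?_⟩
  rwa [Ne, windingNumber_eq_iff, logIncrement_trans, logIncrement_trans, logIncrement_symm,
    add_neg_cancel_comm_assoc, ← windingNumber_eq_iff]

/-- The winding numbers of a function without zeros, as a character of the fundamental group. -/
noncomputable def windingHom (x : X) : FundamentalGroup X x →* Multiplicative ℤ :=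
  .mk' (Quotient.lift (s := Path.Homotopic.setoid x x) (fun γ ↦ .ofAdd (windingNumber f γ))
    fun _ _ h ↦ congrArg _ (windingNumber_eq_of_homotopic f h)) <| by
    rintro ⟨γ⟩ ⟨γ'⟩
    exact congrArg Multiplicative.ofAdd <|
      (windingNumber_trans f γ' γ).trans (add_comm _ _)

/-- The pairing `(γ, f) ↦ windingNumber f γ` between the first homology, realised as the
abelianised fundamental group, and the functions without zeros. -/
noncomputable def windingPairing (x : X) :
    Additive (Abelianization (FundamentalGroup X x)) →ₗ[ℤ] Additive C(X, ℂˣ) →ₗ[ℤ] ℤ :=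
  let ofFunction (f : Additive C(X, ℂˣ)) :
      Additive (Abelianization (FundamentalGroup X x)) →ₗ[ℤ] ℤ :=
    (Abelianization.lift (windingHom f.toMul x)).toAdditiveLeft.toIntLinearMap
  (AddMonoidHom.mk' ofFunction fun f g ↦ by
    ext p
    obtain ⟨⟨γ⟩, rfl⟩ := QuotientGroup.mk_surjective p.toMul
    exact windingNumber_mul f.toMul g.toMul γ).toIntLinearMap.flip

lemma windingPairing_mk (γ : Path x x) :
    windingPairing x (.ofMul (.of (.mk γ))) (.ofMul f) = windingNumber f γ :=
  rfl

lemma exists_windingNumber_ne_zero_of_finite_range {X : Type*} [TopologicalSpace X]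
    {f : C(X, ℂˣ)} {γ : C(ℝ, X)} {w : C(ℝ, ℂ)} (hw : ∀ t, Complex.exp (w t) = f (γ t))
    (hturn : ∀ n : ℕ, w n = w 0 + n * (2 * Real.pi * Complex.I))
    (hfin : (Set.range fun n : ℕ ↦ γ n).Finite) :
    ∃ δ : Path (γ 0) (γ 0), windingNumber f δ ≠ 0 := by
  obtain ⟨i, j, hij, hγij⟩ : ∃ i j : ℕ, i ≠ j ∧ γ i = γ j := by
    simpa [Function.Injective, and_comm] using fun h ↦ Set.infinite_range_of_injective h hfin
  let c : C(unitInterval, ℝ) := ⟨fun t ↦ i + t * (j - i), by fun_prop⟩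
  have hc₀ : c 0 = i := by simp [c]
  have hc₁ : c 1 = j := by simp [c]
  let δ : Path (γ i) (γ i) := ⟨γ.comp c, by simp [hc₀], by simp [hc₁, hγij]⟩
  refine exists_windingNumber_ne_zero_of_joined
    ((PathConnectedSpace.joined 0 (i : ℝ)).map γ.continuous) (γ := δ) ?_
  rw [Ne, windingNumber_eq_iff, logIncrement_eq (γ := δ) (w.comp c) fun t ↦ hw (c t)]
  simp [hc₀, hc₁, hturn, sub_eq_zero, hij.symm]

end WindingNumber

section Loops

/-- A logarithm of a curve that turns around `0` once per unit of time, starting at `exp w₀` and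
bulging outwards by the parameter `ε`. -/
noncomputable def bulgingLog (w₀ : ℂ) (ε : ℝ) : C(ℝ, ℂ) where
  toFun t :=
    w₀ + (ε * (1 - Real.cos (t * (2 * Real.pi))) : ℝ) + (t * (2 * Real.pi) : ℝ) * Complex.I

lemma bulgingLog_natCast (w₀ : ℂ) (ε : ℝ) (n : ℕ) :
    bulgingLog w₀ ε n = w₀ + n * (2 * Real.pi * Complex.I) := by
  simp only [bulgingLog, ContinuousMap.coe_mk, Real.cos_nat_mul_two_pi]
  push_cast
  ring

lemma bulgingLog_re (w₀ : ℂ) (ε t : ℝ) :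
    (bulgingLog w₀ ε t).re = w₀.re + ε * (1 - Real.cos (t * (2 * Real.pi))) := by
  simp [bulgingLog, -Complex.ofReal_mul, -Complex.ofReal_cos]

lemma bulgingLog_im (w₀ : ℂ) (ε t : ℝ) :
    (bulgingLog w₀ ε t).im = w₀.im + t * (2 * Real.pi) := by
  simp [bulgingLog, -Complex.ofReal_mul, -Complex.ofReal_cos]

/- The argument of `r` determines, up to whole turns, when the curve can meet `r`, and the norm of
`r` then determines `ε`. -/
lemma subsingleton_setOf_exp_bulgingLog_eq {w₀ r : ℂ} (hr : r ≠ Complex.exp w₀) :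
    {ε | ∃ t, Complex.exp (bulgingLog w₀ ε t) = r}.Subsingleton := by
  rintro ε ⟨t, ht⟩ ε' ⟨t', ht'⟩
  obtain ⟨n, hn⟩ := Complex.exp_eq_exp_iff_exists_int.1 (ht.trans ht'.symm)
  have him : t * (2 * Real.pi) = t' * (2 * Real.pi) + n * (2 * Real.pi) := by
    simpa [bulgingLog_im, add_assoc] using congrArg Complex.im hn
  have hcos : Real.cos (t * (2 * Real.pi)) = Real.cos (t' * (2 * Real.pi)) := by
    rw [him, Real.cos_add_int_mul_two_pi]
  have hre : ε * (1 - Real.cos (t * (2 * Real.pi))) = ε' * (1 - Real.cos (t * (2 * Real.pi))) := by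
    simpa [bulgingLog_re, ← hcos] using congrArg Complex.re hn
  refine mul_right_cancel₀ (sub_ne_zero.2 fun h ↦ hr ?_) hre
  obtain ⟨k, hk⟩ := (Real.cos_eq_one_iff _).1 h.symm
  rw [← ht, Complex.exp_eq_exp_iff_exists_int]
  exact ⟨k, by apply Complex.ext <;> simp [bulgingLog_re, bulgingLog_im, ← h, hk]⟩

lemma exists_log_curve_avoiding {S : Set ℂ} (hS : S.Finite) {w₀ : ℂ} (hw₀ : Complex.exp w₀ ∉ S) :
    ∃ w : C(ℝ, ℂ), (∀ n : ℕ, w n = w₀ + n * (2 * Real.pi * Complex.I)) ∧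
      ∀ t, Complex.exp (w t) ∉ S := by
  have hbad : (⋃ r ∈ S, {ε | ∃ t, Complex.exp (bulgingLog w₀ ε t) = r}).Finite :=
    hS.biUnion fun r hr ↦ (subsingleton_setOf_exp_bulgingLog_eq fun h ↦ hw₀ (h ▸ hr)).finite
  obtain ⟨ε, hε⟩ := hbad.exists_notMem
  refine ⟨bulgingLog w₀ ε, bulgingLog_natCast w₀ ε, fun t ht ↦ hε ?_⟩
  exact Set.mem_biUnion ht ⟨t, rfl⟩

end Loops

section ComplexPoints

attribute [local instance] complexPointsTopology

/-- The units of a `ℂ`-algebra as functions without zeros on its complex points. -/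
noncomputable def evalUnits (A : Type*) [CommRing A] [Algebra ℂ A] :
    Aˣ →* C(ComplexPoints A, ℂˣ) where
  toFun u := ⟨fun x ↦ Units.map (x : A →* ℂ) u, Units.continuous_iff.2
    ⟨continuous_complexPoints_apply (u : A), continuous_complexPoints_apply (↑u⁻¹ : A)⟩⟩
  map_one' := by ext; simp
  map_mul' u v := by ext; simp

/- Let the `i`-th coordinate turn around `0` on a curve avoiding the ramification; the curve lifts
to `A`, and the lift returns to the finite fibre over its starting point after every turn. -/
lemma IsStandardEtaleAway.exists_windingNumber_ne_zero {ι A : Type*} [CommRing A] [IsDomain A]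
    [Algebra ℂ A] [Algebra (MvPolynomial ι ℂ) A] [IsScalarTower ℂ (MvPolynomial ι ℂ) A]
    [FaithfulSMul (MvPolynomial ι ℂ) A] {θ : A} {D : MvPolynomial ι ℂ}
    (h : IsStandardEtaleAway θ D) (x : ComplexPoints A)
    (hx : x (algebraMap (MvPolynomial ι ℂ) A D) ≠ 0) {i : ι} {u : Aˣ}
    (hu : algebraMap (MvPolynomial ι ℂ) A (.X i) = u) :
    ∃ γ : Path x x, windingNumber (evalUnits A u) γ ≠ 0 := by
  classical
  let R := MvPolynomial ι ℂ
  let p : ComplexPoints R := x.domRestrict R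
  let v : ι → ℂ := Function.update (p ∘ MvPolynomial.X) i 0
  let line (s : ℂ) : ComplexPoints R := MvPolynomial.aeval (v + s • Pi.single i 1)
  have hline_X (s : ℂ) : line s (.X i) = s := by simp [line, R, v]
  have hux : x u ≠ 0 := (u.isUnit.map x).ne_zero
  have hexp : Complex.exp (Complex.log (x u)) = x u := Complex.exp_log hux
  have hline_x : line (x u) = p := by
    refine MvPolynomial.algHom_ext fun j ↦ ?_
    obtain rfl | hj := eq_or_ne j i
    · rw [hline_X, ← hu]
      rfl
    · simp [line, R, v, hj]
  have hbad : {s | line s D = 0}.Finite := by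
    refine finite_setOf_eval_add_smul_eq_zero (s₀ := x u) (?_ : line (x u) D ≠ 0)
    rwa [hline_x]
  obtain ⟨w, hturn, hw⟩ := exists_log_curve_avoiding hbad (w₀ := Complex.log (x u)) (by
    rwa [hexp, Set.mem_ofPred_eq, hline_x])
  have hw₀ : w 0 = Complex.log (x u) := by simpa using hturn 0
  let σ : C(ℝ, ComplexPoints R) := ⟨fun t ↦ line (Complex.exp (w t)),
    continuous_aeval_complexPoints.comp (by fun_prop)⟩
  have hσ₀ : p = σ 0 := by simp [σ, hw₀, hexp, hline_x]
  obtain ⟨γ, rfl, hγ⟩ := (h.existsUnique_continuousMap_domRestrict_eq σ hw 0 x hσ₀).exists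
  refine exists_windingNumber_ne_zero_of_finite_range (w := w) (fun t ↦ ?_) (by rwa [hw₀]) ?_
  · refine (hline_X _).symm.trans ((DFunLike.congr_fun (hγ t) (.X i)).symm.trans ?_)
    exact congrArg (γ t) hu
  · refine (h.finite_fiber_domRestrict (p := σ 0) (hw 0)).subset ?_
    rintro _ ⟨n, rfl⟩
    refine (hγ n).trans ?_
    change line _ = line _
    rw [hturn, Complex.exp_add, Complex.exp_nat_mul_two_pi_mul_I, mul_one, hw₀]

lemma exists_windingNumber_ne_zero_of_transcendental {A : Type*} [CommRing A] [IsDomain A]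
    [Algebra ℂ A] [Algebra.FiniteType ℂ A] {u : Aˣ} (hu : Transcendental ℂ (u : A))
    (x : ComplexPoints A) : ∃ γ : Path x x, windingNumber (evalUnits A u) γ ≠ 0 := by
  obtain ⟨T, huT, hT⟩ := exists_isTranscendenceBasis_superset (R := ℂ) (s := {(u : A)})
    ((algebraicIndependent_singleton_iff (x := fun i : ({(u : A)} : Set A) ↦ (i : A))
      ⟨u, rfl⟩).2 hu)
  let R := MvPolynomial T ℂ
  let g : R →ₐ[ℂ] A := MvPolynomial.aeval ((↑) : T → A)
  let _ : Algebra R A := g.toRingHom.toAlgebra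
  have : IsScalarTower ℂ R A := .of_algHom g
  have : FaithfulSMul R A := (faithfulSMul_iff_algebraMap_injective R A).2 hT.1
  have halg_X (i : T) : algebraMap R A (.X i) = i := MvPolynomial.aeval_X _ i
  have : Algebra.IsAlgebraic R A := hT.isAlgebraic_iff.2 fun i ↦ by
    rw [← halg_X]
    exact isAlgebraic_algebraMap _
  have : Algebra.FiniteType R A := .of_restrictScalars_finiteType ℂ R A
  obtain ⟨θ, D, hD, h⟩ := exists_isStandardEtaleAway R A
  obtain ⟨y, hxy, hy⟩ := exists_joined_apply_ne_zero x
    (FaithfulSMul.algebraMap_eq_zero_iff R A |>.not.2 hD)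
  obtain ⟨γ, hγ⟩ := h.exists_windingNumber_ne_zero y hy (halg_X ⟨u, huT rfl⟩)
  exact exists_windingNumber_ne_zero_of_joined hxy hγ

end ComplexPoints

section Rank

lemma finrank_le_rank_of_flip_injective {R M H : Type*} [CommRing R] [IsDomain R]
    [IsPrincipalIdealRing R] [AddCommGroup M] [Module R M] [Module.Finite R M] [Module.Free R M]
    [AddCommGroup H] [Module R H] {W : H →ₗ[R] M →ₗ[R] R} (hW : Function.Injective W.flip) :
    (Module.finrank R M : Cardinal) ≤ Module.rank R H := by
  have : Module.Free R W.range :=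
    .of_basis (Submodule.basisOfPid (Module.Free.chooseBasis R (M →ₗ[R] R)) W.range).2
  have hrange : Module.finrank R M ≤ Module.finrank R W.range := by
    rw [← Module.finrank_linearMap_self R R W.range]
    refine LinearMap.finrank_le_finrank_of_injective (f := W.range.subtype.flip) fun a b hab ↦ hW ?_
    ext p
    exact LinearMap.congr_fun hab ⟨W p, p, rfl⟩
  have hrank := lift_rank_range_le W
  rw [← Module.finrank_eq_rank, Cardinal.lift_natCast, Cardinal.nat_le_lift_iff] at hrank
  exact (Nat.cast_le.2 hrange).trans hrank

end Rank

section ComplexPoints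

attribute [local instance] complexPointsTopology

variable {A : Type*} [CommRing A] [IsDomain A] [Algebra ℂ A] [Algebra.FiniteType ℂ A]

lemma exists_windingNumber_ne_zero {u : Aˣ}
    (hu : u ∉ (Units.map (algebraMap ℂ A : ℂ →* A)).range) (x : ComplexPoints A) :
    ∃ γ : Path x x, windingNumber (evalUnits A u) γ ≠ 0 :=
  exists_windingNumber_ne_zero_of_transcendental
    (fun h ↦ hu (mem_range_unitsMap_algebraMap_of_isIntegral h.isIntegral)) x

lemma finrank_le_rank_abelianization_of_injective_mod_constants {M : Type*} [AddCommGroup M]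
    [Module.Free ℤ M] [Module.Finite ℤ M] {ν : M →+ Additive Aˣ}
    (hν : ∀ a, (ν a).toMul ∈ (Units.map (algebraMap ℂ A : ℂ →* A)).range → a = 0)
    (x : ComplexPoints A) :
    (Module.finrank ℤ M : Cardinal) ≤
      Module.rank ℤ (Additive (Abelianization (FundamentalGroup (ComplexPoints A) x))) := by
  refine finrank_le_rank_of_flip_injective
    (W := (windingPairing x).compl₂ ((evalUnits A).toAdditive.comp ν).toIntLinearMap) ?_
  refine (injective_iff_map_eq_zero _).2 fun a ha ↦ hν a ?_
  by_contra hu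
  obtain ⟨γ, hγ⟩ := exists_windingNumber_ne_zero hu x
  exact hγ <| (windingPairing_mk _ γ).symm.trans <|
    LinearMap.congr_fun ha (.ofMul (.of (.mk γ)))

end ComplexPoints

attribute [local instance] complexPointsTopology in
theorem samuel_lemma_general (A : Type*) [CommRing A] [IsDomain A] [Algebra ℂ A]
    [Algebra.FiniteType ℂ A] :
    ∃ (m : ℕ) (e : ℂˣ × Multiplicative (Fin m → ℤ) ≃* Aˣ),
      (∀ c, e (c, 1) = Units.map (algebraMap ℂ A : ℂ →* A) c) ∧
      ∀ x : ComplexPoints A, (m : Cardinal) ≤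
        Module.rank ℤ (Additive (Abelianization (FundamentalGroup (ComplexPoints A) x))) := by
  obtain ⟨m, e, he⟩ := exists_units_mulEquiv ℂ A
  refine ⟨m, e, he, fun x ↦ ?_⟩
  let ν : (Fin m → ℤ) →+ Additive Aˣ :=
    (e.toMonoidHom.comp (.inr ℂˣ (Multiplicative (Fin m → ℤ)))).toAdditiveRight
  have hν (a) (ha : (ν a).toMul ∈ (Units.map (algebraMap ℂ A : ℂ →* A)).range) : a = 0 := by
    obtain ⟨c, hc⟩ := ha
    exact (congrArg Prod.snd (e.injective ((he c).trans hc))).symm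
  simpa using finrank_le_rank_abelianization_of_injective_mod_constants hν x

/-- **Samuel's Lemma.** For an irreducible complex affine variety `X` (with coordinate
ring `A`, a finitely generated integral `ℂ`-algebra), the group of units `O(X)^× = Aˣ`
is isomorphic to `ℂ* × ℤ^m` for some `m ≥ 0`; moreover `m` is at most the rank of
`H¹(X, ℤ)`, expressed here as the rank of the abelianized fundamental group of the
space `X = Hom_{ℂ-alg}(A, ℂ)` of complex points with its natural (euclidean) topology. -/
theorem samuel_lemma (A : Type) [CommRing A] [IsDomain A] [Algebra ℂ A]
    [Algebra.FiniteType ℂ A] :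
    ∃ m : ℕ, Nonempty (Aˣ ≃* ℂˣ × Multiplicative (Fin m → ℤ)) ∧
      (letI : TopologicalSpace (A →ₐ[ℂ] ℂ) :=
        TopologicalSpace.induced (fun φ : A →ₐ[ℂ] ℂ => (φ : A → ℂ)) inferInstance
      ∀ x : A →ₐ[ℂ] ℂ,
        (m : Cardinal) ≤
          Module.rank ℤ (Additive (Abelianization (FundamentalGroup (A →ₐ[ℂ] ℂ) x)))) := by
  obtain ⟨m, e, -, hm⟩ := samuel_lemma_general A
  exact ⟨m, ⟨e.symm⟩, hm⟩
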